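/- The set of pairs of integers (n,m) with n ≥ 2, m ≥ 2 and F_n - T_m = -22 is exactly {(3,7), (26,21)}; that is, -22 = 2 - 24 = 121393 - 121415 are the only representations of -22 as a difference of a Fibonacci and a Tribonacci number with indices at least 2. -/

import Mathlib

/-- The Tribonacci sequence: T 0 = 0, T 1 = T 2 = 1,
    T (k+3) = T (k+2) + T (k+1) + T k. -/
def trib : ℕ → ℤ
  | 0 => 0
  | 1 => 1
  | 2 => 1
  | n + 3 => trib (n + 2) + trib (n + 1) + trib n

namespace FT

/-- basis of the order -/
noncomputable def bas (α : ℝ) : Fin 6 → ℝ :=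
  ![1, α, α ^ 2, Real.goldenRatio, α * Real.goldenRatio, α ^ 2 * Real.goldenRatio]

def ZRep (α w B : ℝ) : Prop :=
  ∃ c : Fin 6 → ℤ, w = ∑ i, (c i : ℝ) * bas α i ∧ ∀ i, |(c i : ℝ)| ≤ B

lemma rep_mono {α w B B' : ℝ} (h : ZRep α w B) (hB : B ≤ B') : ZRep α w B' := by
  obtain ⟨c, h1, h2⟩ := h
  exact ⟨c, h1, fun i => (h2 i).trans hB⟩

lemma rep_one (α : ℝ) : ZRep α 1 1 := by
  refine ⟨![1, 0, 0, 0, 0, 0], ?_, ?_⟩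
  · simp [Fin.sum_univ_six, bas]
  · intro i; fin_cases i <;> simp

lemma rep_sum {α : ℝ} {ι : Type*} (s : Finset ι) (t : ι → ℤ) (w : ι → ℝ) (b P : ℝ)
    (hP : ∀ i ∈ s, |(t i : ℝ)| ≤ P) (hb : ∀ i ∈ s, ZRep α (w i) b) :
    ZRep α (∑ i ∈ s, (t i : ℝ) * w i) (s.card * (P * b)) := by
  classical
  have : ∀ i, ∃ c : Fin 6 → ℤ, i ∈ s → (w i = ∑ j, (c j : ℝ) * bas α j ∧ ∀ j, |(c j : ℝ)| ≤ b) := by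
    intro i
    by_cases hi : i ∈ s
    · obtain ⟨c, hc⟩ := hb i hi
      exact ⟨c, fun _ => hc⟩
    · exact ⟨0, fun h => absurd h hi⟩
  choose c hc using this
  refine ⟨fun j => ∑ i ∈ s, t i * c i j, ?_, ?_⟩
  · push_cast
    simp_rw [Finset.sum_mul]
    rw [Finset.sum_comm]
    refine Finset.sum_congr rfl fun i hi => ?_
    rw [(hc i hi).1, Finset.mul_sum]
    refine Finset.sum_congr rfl fun j _ => ?_
    ring
  · intro j
    push_cast
    calc |∑ i ∈ s, (t i : ℝ) * (c i j : ℝ)| ≤ ∑ i ∈ s, |(t i : ℝ) * (c i j : ℝ)| :=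
          Finset.abs_sum_le_sum_abs _ _
      _ ≤ ∑ i ∈ s, P * b := by
          refine Finset.sum_le_sum fun i hi => ?_
          rw [abs_mul]
          exact mul_le_mul (hP i hi) ((hc i hi).2 j) (abs_nonneg _)
            ((abs_nonneg _).trans (hP i hi))
      _ = s.card * (P * b) := by simp

lemma rep_mul {α w w' B B' : ℝ} (hα : α ^ 3 = α ^ 2 + α + 1) (h : ZRep α w B) (h' : ZRep α w' B') :
    ZRep α (w * w') (21 * (B * B')) := by
  obtain ⟨c, h1, h2⟩ := h
  obtain ⟨d, h3, h4⟩ := h'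
  have hφ : Real.goldenRatio ^ 2 = Real.goldenRatio + 1 := Real.goldenRatio_sq
  have hα4 : α ^ 4 = 2 * α ^ 2 + 2 * α + 1 := by linear_combination (α + 1) * hα
  -- product in Z[α]
  let m0 : ℤ → ℤ → ℤ → ℤ → ℤ → ℤ → ℤ := fun a b c x y z => a * x + (b * z + c * y) + c * z
  let m1 : ℤ → ℤ → ℤ → ℤ → ℤ → ℤ → ℤ := fun a b c x y z => a * y + b * x + (b * z + c * y) + 2 * (c * z)
  let m2 : ℤ → ℤ → ℤ → ℤ → ℤ → ℤ → ℤ :=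
    fun a b c x y z => a * z + b * y + c * x + (b * z + c * y) + 2 * (c * z)
  refine ⟨![m0 (c 0) (c 1) (c 2) (d 0) (d 1) (d 2) + m0 (c 3) (c 4) (c 5) (d 3) (d 4) (d 5),
    m1 (c 0) (c 1) (c 2) (d 0) (d 1) (d 2) + m1 (c 3) (c 4) (c 5) (d 3) (d 4) (d 5),
    m2 (c 0) (c 1) (c 2) (d 0) (d 1) (d 2) + m2 (c 3) (c 4) (c 5) (d 3) (d 4) (d 5),
    m0 (c 0) (c 1) (c 2) (d 3) (d 4) (d 5) + m0 (c 3) (c 4) (c 5) (d 0) (d 1) (d 2) +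
      m0 (c 3) (c 4) (c 5) (d 3) (d 4) (d 5),
    m1 (c 0) (c 1) (c 2) (d 3) (d 4) (d 5) + m1 (c 3) (c 4) (c 5) (d 0) (d 1) (d 2) +
      m1 (c 3) (c 4) (c 5) (d 3) (d 4) (d 5),
    m2 (c 0) (c 1) (c 2) (d 3) (d 4) (d 5) + m2 (c 3) (c 4) (c 5) (d 0) (d 1) (d 2) +
      m2 (c 3) (c 4) (c 5) (d 3) (d 4) (d 5)], ?_, ?_⟩
  · have key : ∀ a b c x y z : ℤ, ((a : ℝ) + b * α + c * α ^ 2) * (x + y * α + z * α ^ 2) =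
        (m0 a b c x y z : ℝ) + m1 a b c x y z * α + m2 a b c x y z * α ^ 2 := by
      intro a b c x y z
      simp only [m0, m1, m2]
      push_cast
      linear_combination ((b : ℝ) * z + c * y) * hα + (c : ℝ) * z * hα4
    have k1 := key (c 0) (c 1) (c 2) (d 0) (d 1) (d 2)
    have k2 := key (c 0) (c 1) (c 2) (d 3) (d 4) (d 5)
    have k3 := key (c 3) (c 4) (c 5) (d 0) (d 1) (d 2)
    have k4 := key (c 3) (c 4) (c 5) (d 3) (d 4) (d 5)
    rw [h1, h3]
    generalize m0 = M0 at *
    generalize m1 = M1 at *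
    generalize m2 = M2 at *
    simp only [Fin.sum_univ_six, bas, Matrix.cons_val]
    push_cast
    have hh : ((c 3 : ℝ) + c 4 * α + c 5 * α ^ 2) * (d 3 + d 4 * α + d 5 * α ^ 2) *
        (Real.goldenRatio ^ 2 - (Real.goldenRatio + 1)) = 0 := by rw [hφ]; ring
    linear_combination k1 + Real.goldenRatio * (k2 + k3) + (Real.goldenRatio + 1) * k4 + hh
  · have hp : ∀ i j, |(c i : ℝ) * d j| ≤ B * B' := by
      intro i j
      rw [abs_mul]
      exact mul_le_mul (h2 i) (h4 j) (abs_nonneg _) ((abs_nonneg _).trans (h2 i))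
    have hBB : 0 ≤ B * B' := (abs_nonneg _).trans (hp 0 0)
    have hp' := fun i j => abs_le.1 (hp i j)
    simp only [Fin.forall_fin_succ, Fin.isValue] at hp'
    simp only [m0, m1, m2]
    intro i
    fin_cases i <;> simp <;> rw [abs_le] <;> simp at hp' <;> constructor <;> linarith

lemma rep_pow {α w B : ℝ} (hα : α ^ 3 = α ^ 2 + α + 1) (h : ZRep α w B) (e : ℕ) :
    ZRep α (w ^ e) ((21 * B) ^ e) := by
  induction e with
  | zero => simpa using rep_one α
  | succ e ih =>
    have := rep_mul hα ih h
    rw [pow_succ]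
    refine rep_mono this (le_of_eq ?_)
    ring

end FT

namespace FT

def n0 (a b c : ℤ) : ℤ := a ^ 2 + a * b + 3 * a * c - b ^ 2 - 2 * b * c
def n1 (a b c : ℤ) : ℤ := -a * b - b ^ 2 - b * c + 2 * c ^ 2
def n2 (a b c : ℤ) : ℤ := -a * c + b ^ 2 + b * c - c ^ 2
/-- the norm from Z[α] -/
def nm (a b c : ℤ) : ℤ := a * n0 a b c + b * n2 a b c + c * n1 a b c + c * n2 a b c
/-- coordinates of A^2+AB-B^2 -/
def q0 (a b c x y z : ℤ) : ℤ := (a * a + 2 * (b * c) + c * c) + (a * x + (b * z + c * y) + c * z)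
  - (x * x + 2 * (y * z) + z * z)
def q1 (a b c x y z : ℤ) : ℤ := (2 * (a * b) + 2 * (b * c) + 2 * (c * c))
  + (a * y + b * x + (b * z + c * y) + 2 * (c * z)) - (2 * (x * y) + 2 * (y * z) + 2 * (z * z))
def q2 (a b c x y z : ℤ) : ℤ := (2 * (a * c) + b * b + 2 * (b * c) + 2 * (c * c))
  + (a * z + b * y + c * x + (b * z + c * y) + 2 * (c * z))
  - (2 * (x * z) + y * y + 2 * (y * z) + 2 * (z * z))

lemma nm_mod (a b c : ZMod 3) (h : a * (a ^ 2 + a * b + 3 * a * c - b ^ 2 - 2 * b * c) +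
    b * (-a * c + b ^ 2 + b * c - c ^ 2) + c * (-a * b - b ^ 2 - b * c + 2 * c ^ 2) +
    c * (-a * c + b ^ 2 + b * c - c ^ 2) = 0) : a = 0 ∧ b = 0 ∧ c = 0 := by
  revert a b c; decide

set_option maxRecDepth 100000 in
lemma q_mod (a b c x y z : ZMod 3)
   (h0 : (a * a + 2 * (b * c) + c * c) + (a * x + (b * z + c * y) + c * z)
  - (x * x + 2 * (y * z) + z * z) = 0)
   (h1 : (2 * (a * b) + 2 * (b * c) + 2 * (c * c))
  + (a * y + b * x + (b * z + c * y) + 2 * (c * z)) - (2 * (x * y) + 2 * (y * z) + 2 * (z * z)) = 0)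
   (h2 : (2 * (a * c) + b * b + 2 * (b * c) + 2 * (c * c))
  + (a * z + b * y + c * x + (b * z + c * y) + 2 * (c * z))
  - (2 * (x * z) + y * y + 2 * (y * z) + 2 * (z * z)) = 0) :
   a = 0 ∧ b = 0 ∧ c = 0 ∧ x = 0 ∧ y = 0 ∧ z = 0 := by
  revert a b c x y z; decide +kernel

def N6 (a b c x y z : ℤ) : ℤ := nm (q0 a b c x y z) (q1 a b c x y z) (q2 a b c x y z)

lemma N6_dvd (a b c x y z : ℤ) (h : N6 a b c x y z = 0) :
    3 ∣ a ∧ 3 ∣ b ∧ 3 ∣ c ∧ 3 ∣ x ∧ 3 ∣ y ∧ 3 ∣ z := by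
  have e := congrArg (Int.cast : ℤ → ZMod 3) h
  have e1 := nm_mod (q0 a b c x y z) (q1 a b c x y z) (q2 a b c x y z) (by
    rw [← Int.cast_zero, ← e, N6, nm, n0, n1, n2]; push_cast; ring)
  obtain ⟨f0, f1, f2⟩ := e1
  have := q_mod a b c x y z (by rw [← f0, q0]; push_cast; ring)
    (by rw [← f1, q1]; push_cast; ring) (by rw [← f2, q2]; push_cast; ring)
  have k : ∀ t : ℤ, (t : ZMod 3) = 0 → 3 ∣ t := fun t ht => by
    have := (ZMod.intCast_zmod_eq_zero_iff_dvd t 3).1 ht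
    exact_mod_cast this
  obtain ⟨u1, u2, u3, u4, u5, u6⟩ := this
  exact ⟨k _ u1, k _ u2, k _ u3, k _ u4, k _ u5, k _ u6⟩

lemma N6_hom (a b c x y z : ℤ) :
    N6 (3 * a) (3 * b) (3 * c) (3 * x) (3 * y) (3 * z) = 729 * N6 a b c x y z := by
  have h0 : q0 (3 * a) (3 * b) (3 * c) (3 * x) (3 * y) (3 * z) = 9 * q0 a b c x y z := by
    simp only [q0]; ring
  have h1 : q1 (3 * a) (3 * b) (3 * c) (3 * x) (3 * y) (3 * z) = 9 * q1 a b c x y z := by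
    simp only [q1]; ring
  have h2 : q2 (3 * a) (3 * b) (3 * c) (3 * x) (3 * y) (3 * z) = 9 * q2 a b c x y z := by
    simp only [q2]; ring
  rw [N6, N6, h0, h1, h2]
  simp only [nm, n0, n1, n2]; ring

lemma N6_ne (k : ℕ) : ∀ a b c x y z : ℤ, a.natAbs + b.natAbs + c.natAbs + x.natAbs + y.natAbs +
    z.natAbs = k → N6 a b c x y z = 0 → a = 0 ∧ b = 0 ∧ c = 0 ∧ x = 0 ∧ y = 0 ∧ z = 0 := by
  induction k using Nat.strong_induction_on with
  | _ k ih =>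
    intro a b c x y z hk h
    by_cases h0 : k = 0
    · omega
    obtain ⟨⟨a, rfl⟩, ⟨b, rfl⟩, ⟨c, rfl⟩, ⟨x, rfl⟩, ⟨y, rfl⟩, ⟨z, rfl⟩⟩ := N6_dvd a b c x y z h
    have h' : N6 a b c x y z = 0 := by
      rw [N6_hom] at h; omega
    have := ih _ (by omega) a b c x y z rfl h'
    omega

set_option maxHeartbeats 1000000 in
lemma liouville {α w B : ℝ} (hα : α ^ 3 = α ^ 2 + α + 1) (h1 : 0 ≤ α) (h2 : α ≤ 2)
    (c : Fin 6 → ℤ) (hw : w = ∑ i, (c i : ℝ) * bas α i) (hB : ∀ i, |(c i : ℝ)| ≤ B)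
    (hc : c ≠ 0) : 1 ≤ |w| * (10 ^ 10 * B ^ 5) := by
  set φ := Real.goldenRatio with hφd
  have hφ : φ ^ 2 = φ + 1 := Real.goldenRatio_sq
  have hφ1 : 1 < φ := Real.one_lt_goldenRatio
  have hφ2 : φ < 2 := Real.goldenRatio_lt_two
  have hN : N6 (c 0) (c 1) (c 2) (c 3) (c 4) (c 5) ≠ 0 := by
    intro h
    apply hc
    obtain ⟨u1, u2, u3, u4, u5, u6⟩ := N6_ne _ _ _ _ _ _ _ rfl h
    ext i; fin_cases i <;> assumption
  have hN1 : (1 : ℝ) ≤ |(N6 (c 0) (c 1) (c 2) (c 3) (c 4) (c 5) : ℝ)| := by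
    rw [← Int.cast_abs]; exact_mod_cast Int.one_le_abs hN
  have hB0 : 0 ≤ B := (abs_nonneg _).trans (hB 0)
  have hα4 : α ^ 4 = 2 * α ^ 2 + 2 * α + 1 := by linear_combination (α + 1) * hα
  have hsq : α ^ 2 ≤ 4 := by nlinarith
  obtain ⟨b0, b1, b2, b3, b4, b5⟩ : |(c 0 : ℝ)| ≤ B ∧ |(c 1 : ℝ)| ≤ B ∧ |(c 2 : ℝ)| ≤ B ∧
    |(c 3 : ℝ)| ≤ B ∧ |(c 4 : ℝ)| ≤ B ∧ |(c 5 : ℝ)| ≤ B := ⟨hB 0, hB 1, hB 2, hB 3, hB 4, hB 5⟩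
  have hw' : w = (c 0 + c 1 * α + c 2 * α ^ 2) + (c 3 + c 4 * α + c 5 * α ^ 2) * φ := by
    rw [hw]; simp only [Fin.sum_univ_six, bas, Matrix.cons_val, ← hφd]; ring
  clear hw hB
  generalize c 0 = a at *
  generalize c 1 = b at *
  generalize c 2 = c' at *
  generalize c 3 = x at *
  generalize c 4 = y at *
  generalize c 5 = z at *
  set w2 : ℝ := (a + b * α + c' * α ^ 2) + (x + y * α + z * α ^ 2) * (1 - φ) with hw2
  have hv : w * w2 = (q0 a b c' x y z : ℝ) + q1 a b c' x y z * α + q2 a b c' x y z * α ^ 2 := by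
    rw [hw', hw2]; simp only [q0, q1, q2]; push_cast
    linear_combination (-((x : ℝ) + y * α + z * α ^ 2) ^ 2) * hφ +
      (2 * b * c' + (b * z + c' * y) - 2 * y * z : ℝ) * hα +
      (c' ^ 2 + c' * z - z ^ 2 : ℝ) * hα4
  have hq : ∀ u : ℝ, |u| ≤ B → ∀ v : ℝ, |v| ≤ B → |u * v| ≤ B ^ 2 := by
    intro u hu v hv
    rw [abs_mul, sq]; exact mul_le_mul hu hv (abs_nonneg _) hB0
  have Q0 : |(q0 a b c' x y z : ℝ)| ≤ 12 * B ^ 2 := by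
    simp only [q0]; push_cast
    have := abs_le.1 (hq _ b0 _ b0)
    have := abs_le.1 (hq _ b1 _ b2)
    have := abs_le.1 (hq _ b2 _ b2)
    have := abs_le.1 (hq _ b0 _ b3)
    have := abs_le.1 (hq _ b1 _ b5)
    have := abs_le.1 (hq _ b2 _ b4)
    have := abs_le.1 (hq _ b2 _ b5)
    have := abs_le.1 (hq _ b3 _ b3)
    have := abs_le.1 (hq _ b4 _ b5)
    have := abs_le.1 (hq _ b5 _ b5)
    rw [abs_le]; constructor <;> linarith
  have Q1 : |(q1 a b c' x y z : ℝ)| ≤ 18 * B ^ 2 := by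
    simp only [q1]; push_cast
    have := abs_le.1 (hq _ b0 _ b1)
    have := abs_le.1 (hq _ b1 _ b2)
    have := abs_le.1 (hq _ b2 _ b2)
    have := abs_le.1 (hq _ b0 _ b4)
    have := abs_le.1 (hq _ b1 _ b3)
    have := abs_le.1 (hq _ b1 _ b5)
    have := abs_le.1 (hq _ b2 _ b4)
    have := abs_le.1 (hq _ b2 _ b5)
    have := abs_le.1 (hq _ b3 _ b4)
    have := abs_le.1 (hq _ b4 _ b5)
    have := abs_le.1 (hq _ b5 _ b5)
    rw [abs_le]; constructor <;> linarith
  have Q2 : |(q2 a b c' x y z : ℝ)| ≤ 21 * B ^ 2 := by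
    simp only [q2]; push_cast
    have := abs_le.1 (hq _ b0 _ b2)
    have := abs_le.1 (hq _ b1 _ b1)
    have := abs_le.1 (hq _ b1 _ b2)
    have := abs_le.1 (hq _ b2 _ b2)
    have := abs_le.1 (hq _ b0 _ b5)
    have := abs_le.1 (hq _ b1 _ b4)
    have := abs_le.1 (hq _ b2 _ b3)
    have := abs_le.1 (hq _ b1 _ b5)
    have := abs_le.1 (hq _ b2 _ b4)
    have := abs_le.1 (hq _ b2 _ b5)
    have := abs_le.1 (hq _ b3 _ b5)
    have := abs_le.1 (hq _ b4 _ b4)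
    have := abs_le.1 (hq _ b4 _ b5)
    have := abs_le.1 (hq _ b5 _ b5)
    rw [abs_le]; constructor <;> linarith
  have hN' : (N6 a b c' x y z : ℝ) = nm (q0 a b c' x y z) (q1 a b c' x y z) (q2 a b c' x y z) := rfl
  rw [hN'] at hN1
  clear hN hN' hc
  generalize q0 a b c' x y z = r at *
  generalize q1 a b c' x y z = s at *
  generalize q2 a b c' x y z = t at *
  set w3 : ℝ := n0 r s t + n1 r s t * α + n2 r s t * α ^ 2 with hw3
  have hn : w * w2 * w3 = nm r s t := by
    rw [hv, hw3]; simp only [nm, n0, n1, n2]; push_cast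
    linear_combination ((s : ℝ) * (-r * t + s ^ 2 + s * t - t ^ 2)
        + t * (-r * s - s ^ 2 - s * t + 2 * t ^ 2)) * hα +
      ((t : ℝ) * (-r * t + s ^ 2 + s * t - t ^ 2)) * hα4
  have hW2 : |w2| ≤ 14 * B := by
    have e1 : |(a : ℝ) + b * α + c' * α ^ 2| ≤ 7 * B := by
      calc _ ≤ |(a : ℝ)| + |(b : ℝ) * α| + |(c' : ℝ) * α ^ 2| := abs_add_three _ _ _
        _ ≤ B + B * 2 + B * 4 := by
          rw [abs_mul, abs_mul, abs_of_nonneg h1, abs_of_nonneg (sq_nonneg α)]; gcongr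
        _ = 7 * B := by ring
    have e2 : |(x : ℝ) + y * α + z * α ^ 2| ≤ 7 * B := by
      calc _ ≤ |(x : ℝ)| + |(y : ℝ) * α| + |(z : ℝ) * α ^ 2| := abs_add_three _ _ _
        _ ≤ B + B * 2 + B * 4 := by
          rw [abs_mul, abs_mul, abs_of_nonneg h1, abs_of_nonneg (sq_nonneg α)]; gcongr
        _ = 7 * B := by ring
    have e3 : |1 - φ| ≤ 1 := by rw [abs_le]; constructor <;> linarith
    calc |w2| ≤ |(a : ℝ) + b * α + c' * α ^ 2| + |((x : ℝ) + y * α + z * α ^ 2) * (1 - φ)| :=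
          abs_add_le _ _
      _ ≤ 7 * B + 7 * B * 1 := by
          rw [abs_mul]; gcongr
      _ = 14 * B := by ring
  have hr : ∀ u : ℝ, |u| ≤ 21 * B ^ 2 → ∀ v : ℝ, |v| ≤ 21 * B ^ 2 → |u * v| ≤ 441 * B ^ 4 := by
    intro u hu v hv
    rw [abs_mul]
    calc _ ≤ (21 * B ^ 2) * (21 * B ^ 2) := mul_le_mul hu hv (abs_nonneg _) (by positivity)
      _ = _ := by ring
  have B2 : 0 ≤ B ^ 2 := sq_nonneg B
  have Q0' : |(r : ℝ)| ≤ 21 * B ^ 2 := by linarith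
  have Q1' : |(s : ℝ)| ≤ 21 * B ^ 2 := by linarith
  have hrr := abs_le.1 (hr _ Q0' _ Q0')
  have hrs := abs_le.1 (hr _ Q0' _ Q1')
  have hrt := abs_le.1 (hr _ Q0' _ Q2)
  have hss := abs_le.1 (hr _ Q1' _ Q1')
  have hst := abs_le.1 (hr _ Q1' _ Q2)
  have htt := abs_le.1 (hr _ Q2 _ Q2)
  have N0 : |(n0 r s t : ℝ)| ≤ 8 * (441 * B ^ 4) := by
    simp only [n0]; push_cast; rw [abs_le]; constructor <;> linarith
  have N1 : |(n1 r s t : ℝ)| ≤ 8 * (441 * B ^ 4) := by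
    simp only [n1]; push_cast; rw [abs_le]; constructor <;> linarith
  have N2 : |(n2 r s t : ℝ)| ≤ 8 * (441 * B ^ 4) := by
    simp only [n2]; push_cast; rw [abs_le]; constructor <;> linarith
  have hW3 : |w3| ≤ 24696 * B ^ 4 := by
    calc |w3| ≤ |(n0 r s t : ℝ)| + |(n1 r s t : ℝ) * α| + |(n2 r s t : ℝ) * α ^ 2| := abs_add_three _ _ _
      _ ≤ 8 * (441 * B ^ 4) + 8 * (441 * B ^ 4) * 2 + 8 * (441 * B ^ 4) * 4 := by
          rw [abs_mul, abs_mul, abs_of_nonneg h1, abs_of_nonneg (sq_nonneg α)]; gcongr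
      _ = 24696 * B ^ 4 := by ring
  rw [← hn, abs_mul, abs_mul] at hN1
  calc (1 : ℝ) ≤ |w| * |w2| * |w3| := hN1
    _ ≤ |w| * (14 * B) * (24696 * B ^ 4) := by gcongr
    _ = |w| * (345744 * B ^ 5) := by ring
    _ ≤ |w| * (10 ^ 10 * B ^ 5) := by
      have : 0 ≤ B ^ 5 := by positivity
      gcongr; norm_num

end FT

namespace FT

lemma schwarz (Z Rad : ℝ) (hZ : Z < Rad) (s : Finset ℂ) :
    ∀ (g : ℂ → ℂ) (B : ℝ), Differentiable ℂ g → (∀ z, ‖z‖ = Rad → ‖g z‖ ≤ B) →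
    (∀ a ∈ s, ‖a‖ ≤ Z) → (∀ a ∈ s, g a = 0) → ∀ x, ‖x‖ ≤ Rad →
    ‖g x‖ * (Rad - Z) ^ s.card ≤ B * ∏ a ∈ s, ‖x - a‖ := by
  classical
  have hd : 0 < Rad - Z := by linarith
  induction s using Finset.induction_on with
  | empty =>
    intro g B hg hB _ _ x hx
    simp only [Finset.card_empty, pow_zero, mul_one, Finset.prod_empty]
    have hR : Rad ≠ 0 ∨ Rad = 0 := (em (Rad = 0)).symm
    rcases hR with hR | hR
    · refine Complex.norm_le_of_forall_mem_frontier_norm_le (U := Metric.ball 0 Rad)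
        Metric.isBounded_ball hg.diffContOnCl ?_ ?_
      · intro z hz
        rw [frontier_ball _ hR] at hz
        exact hB z (by simpa using hz)
      · rw [closure_ball _ hR]; simpa using hx
    · exact hB x (le_antisymm hx (by rw [hR]; positivity))
  | insert a s ha ih =>
    intro g B hg hB hn h0 x hx
    have ha0 : g a = 0 := h0 a (Finset.mem_insert_self _ _)
    have hh : Differentiable ℂ (dslope g a) := by
      have := (Complex.differentiableOn_dslope (s := Set.univ) (c := a) (f := g)
        Filter.univ_mem).2 hg.differentiableOn
      exact differentiableOn_univ.1 this
    have hgm : ∀ z, g z = (z - a) * dslope g a z := by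
      intro z
      have := sub_smul_dslope g a z
      rw [ha0, sub_zero, smul_eq_mul] at this
      exact this.symm
    have hna : ‖a‖ ≤ Z := hn a (Finset.mem_insert_self _ _)
    have := ih (dslope g a) (B / (Rad - Z)) hh ?_ (fun b hb => hn b (Finset.mem_insert_of_mem hb))
      ?_ x hx
    · rw [Finset.card_insert_of_notMem ha, Finset.prod_insert ha, hgm x, norm_mul]
      calc ‖x - a‖ * ‖dslope g a x‖ * (Rad - Z) ^ (s.card + 1)
          = ‖x - a‖ * (Rad - Z) * (‖dslope g a x‖ * (Rad - Z) ^ s.card) := by ring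
        _ ≤ ‖x - a‖ * (Rad - Z) * (B / (Rad - Z) * ∏ a ∈ s, ‖x - a‖) := by gcongr
        _ = B * (‖x - a‖ * ∏ a ∈ s, ‖x - a‖) := by field_simp
    · intro z hz
      rw [le_div_iff₀ hd]
      calc ‖dslope g a z‖ * (Rad - Z) ≤ ‖dslope g a z‖ * ‖z - a‖ := by
            gcongr
            have := norm_sub_norm_le z a
            linarith
        _ = ‖g z‖ := by rw [hgm z, norm_mul, mul_comm]
        _ ≤ B := hB z hz
    · intro b hb
      have hb0 := h0 b (Finset.mem_insert_of_mem hb)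
      rw [hgm b] at hb0
      have : b - a ≠ 0 := by
        rw [sub_ne_zero]; rintro rfl; exact ha hb
      exact (mul_eq_zero.1 hb0).resolve_left this

/-- product of distances of distinct integers -/
lemma prod_dist (s : Finset ℕ) (a : ℕ) (ha : a ∉ s) :
    (s.card.factorial : ℝ) ≤ 2 ^ s.card * ∏ b ∈ s, |(a : ℝ) - b| := by
  classical
  -- split into below and above
  have key : ∀ (n : ℕ) (t : Finset ℕ), t.card = n → (∀ b ∈ t, 1 ≤ b) → n.factorial ≤ ∏ b ∈ t, b := by
    intro n
    induction n with
    | zero => intro t ht _; simp [Finset.card_eq_zero.1 ht]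
    | succ n ih =>
      intro t ht hb
      have hne : t.Nonempty := by rw [← Finset.card_pos]; omega
      have hm := Finset.max'_mem t hne
      have hsub : t ⊆ Finset.Icc 1 (t.max' hne) := fun b h =>
        Finset.mem_Icc.2 ⟨hb b h, Finset.le_max' _ _ h⟩
      have hc := Finset.card_le_card hsub
      rw [Nat.card_Icc, ht] at hc
      rw [← Finset.mul_prod_erase t _ hm, Nat.factorial_succ]
      apply Nat.mul_le_mul (by omega)
      exact ih _ (by rw [Finset.card_erase_of_mem hm]; omega)
        (fun b h => hb b (Finset.mem_of_mem_erase h))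
  set s1 := s.filter (· < a)
  set s2 := s.filter (fun b => ¬ b < a)
  have hcard : s1.card + s2.card = s.card := Finset.card_filter_add_card_filter_not _
  have hprod : (∏ b ∈ s, |(a : ℝ) - b|) = (∏ b ∈ s1, |(a : ℝ) - b|) * ∏ b ∈ s2, |(a : ℝ) - b| :=
    (Finset.prod_filter_mul_prod_filter_not s _ _).symm
  have k1 : (s1.card.factorial : ℝ) ≤ ∏ b ∈ s1, |(a : ℝ) - b| := by
    have hinj : Set.InjOn (fun b => a - b) (s1 : Set ℕ) := by
      intro x hx y hy hxy
      have := (Finset.mem_filter.1 hx).2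
      have := (Finset.mem_filter.1 hy).2
      simp only at hxy; omega
    have := key s1.card (s1.image (fun b => a - b)) (Finset.card_image_of_injOn hinj) (by
      intro b hb
      obtain ⟨c, hc, rfl⟩ := Finset.mem_image.1 hb
      have := (Finset.mem_filter.1 hc).2
      omega)
    rw [Finset.prod_image hinj] at this
    calc (s1.card.factorial : ℝ) ≤ ((∏ b ∈ s1, (a - b) : ℕ) : ℝ) := by exact_mod_cast this
      _ = _ := by
        push_cast
        refine Finset.prod_congr rfl fun b hb => ?_
        have := (Finset.mem_filter.1 hb).2
        rw [Nat.cast_sub this.le, abs_of_nonneg]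
        have : (b : ℝ) < a := by exact_mod_cast this
        linarith
  have k2 : (s2.card.factorial : ℝ) ≤ ∏ b ∈ s2, |(a : ℝ) - b| := by
    have hgt : ∀ b ∈ s2, a < b := by
      intro b hb
      have h1 := (Finset.mem_filter.1 hb).2
      have h2 := (Finset.mem_filter.1 hb).1
      have : b ≠ a := by rintro rfl; exact ha h2
      omega
    have hinj : Set.InjOn (fun b => b - a) (s2 : Set ℕ) := by
      intro x hx y hy hxy
      have := hgt x hx
      have := hgt y hy
      simp only at hxy; omega
    have := key s2.card (s2.image (fun b => b - a)) (Finset.card_image_of_injOn hinj) (by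
      intro b hb
      obtain ⟨c, hc, rfl⟩ := Finset.mem_image.1 hb
      have := hgt c hc
      omega)
    rw [Finset.prod_image hinj] at this
    calc (s2.card.factorial : ℝ) ≤ ((∏ b ∈ s2, (b - a) : ℕ) : ℝ) := by exact_mod_cast this
      _ = _ := by
        push_cast
        refine Finset.prod_congr rfl fun b hb => ?_
        have := hgt b hb
        have h' : (a : ℝ) < b := by exact_mod_cast this
        rw [Nat.cast_sub this.le, abs_sub_comm, abs_of_nonneg]
        linarith
  rw [hprod, ← hcard]
  have hch : (s1.card + s2.card).factorial ≤ 2 ^ (s1.card + s2.card) * (s1.card.factorial * s2.card.factorial) := by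
    rw [← Nat.add_choose_mul_factorial_mul_factorial, mul_assoc]
    exact Nat.mul_le_mul_right _ (Nat.choose_le_two_pow _ _)
  calc ((s1.card + s2.card).factorial : ℝ)
      ≤ 2 ^ (s1.card + s2.card) * (s1.card.factorial * s2.card.factorial) := by exact_mod_cast hch
    _ ≤ _ := by gcongr

/-- approximate Schwarz lemma -/
lemma approx_schwarz (f : ℂ → ℂ) (hf : Differentiable ℂ f) (s : Finset ℕ) (Z : ℝ) (hZ : 0 < Z)
    (hs : ∀ a ∈ s, (a : ℝ) ≤ Z) (A E : ℝ) (hA : ∀ z, ‖z‖ = 21 * Z → ‖f z‖ ≤ A)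
    (hE : ∀ a ∈ s, ‖f a‖ ≤ E) (x : ℕ) (hx : (x : ℝ) ≤ Z) (hcs : 0 < s.card) (hE0 : 0 ≤ E) :
    ‖f x‖ ≤ A * (1 / 20) ^ s.card +
      2 * (s.card * (E * ((44 * Z) ^ (s.card - 1) / (s.card - 1).factorial))) := by
  classical
  set N := s.card with hN
  let q : ℂ → ℂ := fun z => ∑ a ∈ s, f a * ∏ b ∈ s.erase a, ((z - b) / ((a : ℂ) - b))
  have hq : Differentiable ℂ q := by
    intro z
    simp only [q]
    fun_prop
  have hq0 : ∀ a ∈ s, q a = f a := by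
    intro a ha
    simp only [q]
    rw [Finset.sum_eq_single a]
    · rw [Finset.prod_eq_one, mul_one]
      intro b hb
      have : (a : ℂ) - b ≠ 0 := by
        rw [sub_ne_zero]
        exact_mod_cast (Finset.ne_of_mem_erase hb).symm
      exact div_self this
    · intro b hb hba
      rw [Finset.prod_eq_zero (i := a)]
      · simp
      · exact Finset.mem_erase.2 ⟨hba.symm, ha⟩
      · simp
    · exact fun h => absurd ha h
  set Qb : ℝ := N * (E * ((44 * Z) ^ (N - 1) / (N - 1).factorial)) with hQb
  have hQ : ∀ z : ℂ, ‖z‖ ≤ 21 * Z → ‖q z‖ ≤ Qb := by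
    intro z hz
    calc ‖q z‖ ≤ ∑ a ∈ s, ‖f a * ∏ b ∈ s.erase a, ((z - b) / ((a : ℂ) - b))‖ := norm_sum_le _ _
      _ ≤ ∑ a ∈ s, E * ((44 * Z) ^ (N - 1) / (N - 1).factorial) := by
        refine Finset.sum_le_sum fun a ha => ?_
        rw [norm_mul]
        have hc : (s.erase a).card = N - 1 := Finset.card_erase_of_mem ha
        refine mul_le_mul (hE a ha) ?_ (norm_nonneg _) hE0
        rw [norm_prod]
        simp_rw [norm_div]
        rw [Finset.prod_div_distrib]
        have h1 : ∏ b ∈ s.erase a, ‖z - b‖ ≤ (22 * Z) ^ (N - 1) := by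
          rw [← hc, ← Finset.prod_const]
          refine Finset.prod_le_prod (fun _ _ => norm_nonneg _) fun b hb => ?_
          have hb' := hs b (Finset.mem_of_mem_erase hb)
          calc ‖z - b‖ ≤ ‖z‖ + ‖(b : ℂ)‖ := norm_sub_le _ _
            _ ≤ 21 * Z + Z := by rw [Complex.norm_natCast]; gcongr
            _ = 22 * Z := by ring
        have h2 := prod_dist (s.erase a) a (Finset.notMem_erase a s)
        rw [hc] at h2
        have h3 : ∏ b ∈ s.erase a, ‖(a : ℂ) - b‖ = ∏ b ∈ s.erase a, |(a : ℝ) - b| := by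
          refine Finset.prod_congr rfl fun b _ => ?_
          rw [← Complex.ofReal_natCast, ← Complex.ofReal_natCast, ← Complex.ofReal_sub,
            Complex.norm_real, Real.norm_eq_abs]
        rw [h3]
        have hfac : (0 : ℝ) < (N - 1).factorial := by exact_mod_cast Nat.factorial_pos _
        have hpos : 0 < ∏ b ∈ s.erase a, |(a : ℝ) - b| := by
          by_contra hcon
          have : (2 : ℝ) ^ (N - 1) * ∏ b ∈ s.erase a, |(a : ℝ) - b| ≤ 0 :=
            mul_nonpos_of_nonneg_of_nonpos (by positivity) (not_lt.1 hcon)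
          linarith
        rw [div_le_div_iff₀ hpos hfac]
        calc (∏ b ∈ s.erase a, ‖z - b‖) * ((N - 1).factorial : ℝ)
            ≤ (22 * Z) ^ (N - 1) * (2 ^ (N - 1) * ∏ b ∈ s.erase a, |(a : ℝ) - b|) := by gcongr
          _ = (44 * Z) ^ (N - 1) * ∏ b ∈ s.erase a, |(a : ℝ) - b| := by
            rw [show (44 : ℝ) * Z = (22 * Z) * 2 by ring, mul_pow (22 * Z) 2]; ring
      _ = Qb := by rw [Finset.sum_const, nsmul_eq_mul]
  have hQb0 : 0 ≤ Qb := by positivity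
  have hxx : ‖(x : ℂ)‖ ≤ 21 * Z := by rw [Complex.norm_natCast]; linarith
  have := schwarz Z (21 * Z) (by linarith) (s.image (Nat.cast : ℕ → ℂ)) (fun z => f z - q z) (A + Qb)
    (hf.sub hq) ?_ ?_ ?_ x hxx
  · rw [Finset.card_image_of_injective _ Nat.cast_injective, ← hN,
      Finset.prod_image (fun _ _ _ _ h => Nat.cast_injective h)] at this
    have hp : ∏ b ∈ s, ‖(x : ℂ) - b‖ ≤ Z ^ N := by
      rw [hN, ← Finset.prod_const]
      refine Finset.prod_le_prod (fun _ _ => norm_nonneg _) fun b hb => ?_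
      rw [← Complex.ofReal_natCast, ← Complex.ofReal_natCast, ← Complex.ofReal_sub,
            Complex.norm_real, Real.norm_eq_abs, abs_le]
      have := hs b hb
      have h1 : (0 : ℝ) ≤ x := Nat.cast_nonneg _
      have h2 : (0 : ℝ) ≤ b := Nat.cast_nonneg _
      constructor <;> linarith
    have hA0 : 0 ≤ A := (norm_nonneg _).trans (hA (21 * Z : ℝ) (by
      rw [Complex.norm_real, Real.norm_eq_abs, abs_of_pos (by linarith)]))
    have h3 : ‖f x - q x‖ * (20 * Z) ^ N ≤ (A + Qb) * Z ^ N := by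
      calc _ = ‖f x - q x‖ * (21 * Z - Z) ^ N := by ring_nf
        _ ≤ _ := this
        _ ≤ _ := by gcongr
    have h4 : ‖f x - q x‖ ≤ (A + Qb) * (1 / 20) ^ N := by
      have hZN : 0 < Z ^ N := by positivity
      rw [mul_pow, ← mul_assoc] at h3
      have h5 := le_of_mul_le_mul_right h3 hZN
      rw [one_div, inv_pow, ← div_eq_mul_inv, le_div_iff₀ (by positivity)]
      exact h5
    have h20 : (1 / 20 : ℝ) ^ N ≤ 1 := pow_le_one₀ (by norm_num) (by norm_num)
    calc ‖f x‖ = ‖(f x - q x) + q x‖ := by ring_nf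
      _ ≤ ‖f x - q x‖ + ‖q x‖ := norm_add_le _ _
      _ ≤ (A + Qb) * (1 / 20) ^ N + Qb := by gcongr; exact hQ _ hxx
      _ = A * (1 / 20) ^ N + Qb * (1 / 20) ^ N + Qb := by ring
      _ ≤ A * (1 / 20) ^ N + Qb * 1 + Qb := by gcongr
      _ = _ := by ring
  · intro z hz
    calc ‖f z - q z‖ ≤ ‖f z‖ + ‖q z‖ := norm_sub_le _ _
      _ ≤ A + Qb := add_le_add (hA z hz) (hQ z hz.le)
  · intro a ha
    obtain ⟨b, hb, rfl⟩ := Finset.mem_image.1 ha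
    rw [Complex.norm_natCast]; exact hs b hb
  · intro a ha
    obtain ⟨b, hb, rfl⟩ := Finset.mem_image.1 ha
    simp only [hq0 b hb, sub_self]

end FT

namespace FT
open Polynomial in
lemma zero_est (K L : ℕ) (P : ℕ → ℝ[X]) (hdeg : ∀ l, l < L → (P l).natDegree < K)
    (X : ℝ) (hX0 : 0 < X) (hX1 : X ≠ 1) (pts : Finset ℕ) (hpts : K * L ≤ pts.card)
    (hz : ∀ z ∈ pts, ∃ w : ℝ, w ≠ 0 ∧ ∀ i, i < L →
      ∑ l ∈ Finset.range L, (P l).eval ((z : ℝ) + i) * (X ^ (i * l) * w ^ l) = 0) :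
    ∀ l, l < L → P l = 0 := by
  classical
  by_contra hcon
  push Not at hcon
  obtain ⟨l0, hl0, hPl0⟩ := hcon
  set I := (Finset.range L).filter (fun l => P l ≠ 0) with hI
  have hI0 : l0 ∈ I := by simp [hI, hl0, hPl0]
  have hIc : 0 < I.card := Finset.card_pos.2 ⟨l0, hI0⟩
  have hIL : I.card ≤ L := by simpa using Finset.card_filter_le (Finset.range L) (fun l => P l ≠ 0)
  let e : Fin I.card → ℕ := fun j => I.orderEmbOfFin rfl j
  have he : ∀ j, e j ∈ I := fun j => Finset.orderEmbOfFin_mem _ _ _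
  have heinj : Function.Injective e := fun a b h => (I.orderEmbOfFin rfl).injective h
  have heL : ∀ j, e j < L := fun j => by simpa using (Finset.mem_filter.1 (he j)).1
  have heP : ∀ j, P (e j) ≠ 0 := fun j => (Finset.mem_filter.1 (he j)).2
  have heimg : Finset.univ.image e = I := by
    apply Finset.eq_of_subset_of_card_le
    · intro x hx
      obtain ⟨j, _, rfl⟩ := Finset.mem_image.1 hx
      exact he j
    · rw [Finset.card_image_of_injective _ heinj]; simp
  have hsum : ∀ g : ℕ → ℝ, ∑ x ∈ I, g x = ∑ j, g (e j) := by
    intro g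
    conv_lhs => rw [← heimg]
    rw [Finset.sum_image (fun _ _ _ _ h => heinj h)]
  let A : Matrix (Fin I.card) (Fin I.card) ℝ[X] := fun i j =>
    taylor (i : ℝ) (P (e j)) * C (X ^ ((i : ℕ) * e j))
  have hXp : ∀ n : ℕ, X ^ n ≠ 0 := fun n => (pow_pos hX0 n).ne'
  have hA0 : ∀ i j, A i j ≠ 0 := by
    intro i j
    refine mul_ne_zero ?_ (C_ne_zero.2 (hXp _))
    rw [Ne, LinearMap.map_eq_zero_iff _ (taylor_injective _)]
    exact heP j
  have hAd : ∀ i j, (A i j).natDegree = (P (e j)).natDegree := by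
    intro i j
    simp only [A]
    rw [natDegree_mul_C (hXp _), natDegree_taylor]
  have hAl : ∀ i j, (A i j).leadingCoeff = X ^ ((i : ℕ) * e j) * (P (e j)).leadingCoeff := by
    intro i j
    simp only [A]
    rw [leadingCoeff_mul, leadingCoeff_C, leadingCoeff_taylor, mul_comm]
  set D := ∑ j, (P (e j)).natDegree with hD
  have hDlt : D < K * L := by
    calc D ≤ ∑ _j : Fin I.card, (K - 1) := Finset.sum_le_sum fun j _ => by
            have := hdeg _ (heL j); omega
      _ = I.card * (K - 1) := by simp
      _ < K * L := by
        have hK : 0 < K := by have := hdeg _ hl0; omega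
        calc I.card * (K - 1) < I.card * K := by
              apply Nat.mul_lt_mul_of_pos_left _ hIc; omega
          _ ≤ L * K := Nat.mul_le_mul_right _ hIL
          _ = K * L := mul_comm _ _
  have hpd : ∀ σ : Equiv.Perm (Fin I.card), (∏ j, A (σ j) j).natDegree = D := by
    intro σ
    rw [natDegree_prod _ _ (fun j _ => hA0 _ _)]
    exact Finset.sum_congr rfl fun j _ => hAd _ _
  have hdetdeg : A.det.natDegree ≤ D := by
    rw [Matrix.det_apply]
    apply natDegree_sum_le_of_forall_le
    intro σ _
    refine (natDegree_smul_le _ _).trans ?_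
    rw [hpd σ]
  have hcoef : A.det.coeff D =
      (Matrix.of fun (i j : Fin I.card) => X ^ ((i : ℕ) * e j) * (P (e j)).leadingCoeff).det := by
    rw [Matrix.det_apply, Matrix.det_apply, finsetSum_coeff]
    refine Finset.sum_congr rfl fun σ _ => ?_
    rw [coeff_smul]
    congr 1
    conv_lhs => rw [← hpd σ]
    rw [coeff_natDegree, leadingCoeff_prod]
    exact Finset.prod_congr rfl fun j _ => hAl _ _
  have hdet0 : A.det = 0 := by
    apply eq_zero_of_natDegree_lt_card_of_eval_eq_zero' A.det (pts.image (Nat.cast : ℕ → ℝ))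
    · intro y hy
      obtain ⟨z, hzp, rfl⟩ := Finset.mem_image.1 hy
      obtain ⟨w, hw, hww⟩ := hz z hzp
      rw [← coe_evalRingHom, RingHom.map_det]
      apply Matrix.exists_mulVec_eq_zero_iff.1
      refine ⟨fun j => w ^ e j, ?_, ?_⟩
      · intro h
        have := congrFun h ⟨0, hIc⟩
        exact pow_ne_zero _ hw this
      · funext i
        have := hww i (i.2.trans_le hIL)
        rw [← Finset.sum_filter_of_ne (p := fun l => P l ≠ 0)] at this
        · rw [← hI, hsum] at this
          simp only [Matrix.mulVec, dotProduct, Pi.zero_apply]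
          rw [← this]
          refine Finset.sum_congr rfl fun j _ => ?_
          change eval (z : ℝ) (taylor ((i : ℕ) : ℝ) (P (e j)) * C (X ^ ((i : ℕ) * e j))) * w ^ e j = _
          rw [eval_mul, eval_C, taylor_eval]
          ring
        · intro l _ h hP
          apply h; rw [hP]; simp
    · rw [Finset.card_image_of_injective _ Nat.cast_injective]
      omega
  rw [hdet0, coeff_zero] at hcoef
  have h2 : (Matrix.of fun (i j : Fin I.card) => X ^ ((i : ℕ) * e j) * (P (e j)).leadingCoeff) =
      (Matrix.vandermonde (fun j => X ^ e j)).transpose *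
        Matrix.diagonal (fun j => (P (e j)).leadingCoeff) := by
    ext i j
    rw [Matrix.mul_diagonal]
    simp only [Matrix.of_apply, Matrix.transpose_apply, Matrix.vandermonde_apply]
    rw [← pow_mul, mul_comm (e j)]
  rw [h2, Matrix.det_mul, Matrix.det_transpose, Matrix.det_diagonal] at hcoef
  refine absurd hcoef.symm (mul_ne_zero ?_ ?_)
  · rw [Matrix.det_vandermonde_ne_zero_iff]
    intro a b hab
    exact heinj (pow_right_injective₀ hX0 hX1 hab)
  · exact Finset.prod_ne_zero_iff.2 fun j _ => leadingCoeff_ne_zero.2 (heP j)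
end FT

namespace FT
open Matrix in
attribute [local instance] Matrix.seminormedAddCommGroup Matrix.normedAddCommGroup in
lemma siegel_rep {α : ℝ} (R S K L : ℕ) (hR : 0 < R) (hS : 0 < S) (hKL : K * L = 12 * (R * S))
    (w : ℕ → ℕ → ℕ → ℕ → ℝ) (B : ℝ) (hB : 1 ≤ B)
    (hw : ∀ r < R, ∀ s < S, ∀ k < K, ∀ l < L, ZRep α (w r s k l) B) :
    ∃ p : ℕ → ℕ → ℤ, (∃ k < K, ∃ l < L, p k l ≠ 0) ∧
      (∀ k l, |(p k l : ℝ)| ≤ K * L * B) ∧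
      ∀ r < R, ∀ s < S, ∑ k ∈ Finset.range K, ∑ l ∈ Finset.range L, (p k l : ℝ) * w r s k l = 0 := by
  classical
  have hex : ∀ (a : Fin R × Fin S) (b : Fin K × Fin L), ∃ c : Fin 6 → ℤ,
      w a.1 a.2 b.1 b.2 = ∑ i, (c i : ℝ) * bas α i ∧ ∀ i, |(c i : ℝ)| ≤ B :=
    fun a b => hw _ a.1.2 _ a.2.2 _ b.1.2 _ b.2.2
  choose c hc hcB using hex
  let A : Matrix ((Fin R × Fin S) × Fin 6) (Fin K × Fin L) ℤ := fun x b => c x.1 b x.2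
  have hcα : Fintype.card ((Fin R × Fin S) × Fin 6) = 6 * (R * S) := by simp; ring
  have hcβ : Fintype.card (Fin K × Fin L) = 12 * (R * S) := by simp [hKL]
  have hRS : 0 < R * S := Nat.mul_pos hR hS
  obtain ⟨t, ht0, htA, htn⟩ := Int.Matrix.exists_ne_zero_int_vec_norm_le A
    (by rw [hcα, hcβ]; omega) (by rw [hcα]; omega)
  rw [hcα, hcβ] at htn
  have hexp : (((6 * (R * S) : ℕ) : ℝ) / (((12 * (R * S) : ℕ) : ℝ) - ((6 * (R * S) : ℕ) : ℝ))) = 1 := by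
    have : (0 : ℝ) < ((R * S : ℕ) : ℝ) := by exact_mod_cast hRS
    rw [Nat.cast_mul 6, Nat.cast_mul 12]
    push_cast at this ⊢
    rw [div_eq_one_iff_eq]
    · ring
    · nlinarith
  rw [hexp, Real.rpow_one] at htn
  have hAn : ‖A‖ ≤ B := by
    rw [Matrix.norm_le_iff (by linarith)]
    intro x b
    rw [Int.norm_eq_abs]
    exact hcB _ _ _
  have htB : ∀ b, |(t b : ℝ)| ≤ K * L * B := by
    intro b
    calc |(t b : ℝ)| = ‖t b‖ := (Int.norm_eq_abs _).symm
      _ ≤ ‖t‖ := norm_le_pi_norm t b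
      _ ≤ _ := htn
      _ ≤ ((12 * (R * S) : ℕ) : ℝ) * B := by
        gcongr
        exact max_le hB hAn
      _ = _ := by rw [← hKL]; push_cast; ring
  refine ⟨fun k l => if h : k < K ∧ l < L then t (⟨k, h.1⟩, ⟨l, h.2⟩) else 0, ?_, ?_, ?_⟩
  · obtain ⟨b, hb⟩ := Function.ne_iff.1 ht0
    refine ⟨b.1, b.1.2, b.2, b.2.2, ?_⟩
    simpa using hb
  · intro k l
    by_cases h : k < K ∧ l < L
    · simp only [h, and_self, dite_true]; exact htB _
    · simp only [h, dite_false]; simp; positivity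
  · intro r hr s hs
    rw [Finset.sum_range]
    simp_rw [Finset.sum_range]
    have h0 : ∀ j, ∑ b, c (⟨r, hr⟩, ⟨s, hs⟩) b j * t b = 0 := fun j =>
      congrFun htA ((⟨r, hr⟩, ⟨s, hs⟩), j)
    calc _ = ∑ b : Fin K × Fin L, (t b : ℝ) * w r s b.1 b.2 := by
          rw [Fintype.sum_prod_type]
          simp
      _ = ∑ b : Fin K × Fin L, (t b : ℝ) * ∑ i, (c (⟨r, hr⟩, ⟨s, hs⟩) b i : ℝ) * bas α i := by
          refine Finset.sum_congr rfl fun b _ => ?_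
          rw [← hc (⟨r, hr⟩, ⟨s, hs⟩) b]
      _ = ∑ i, ((∑ b, c (⟨r, hr⟩, ⟨s, hs⟩) b i * t b : ℤ) : ℝ) * bas α i := by
          simp_rw [Finset.mul_sum]
          rw [Finset.sum_comm]
          refine Finset.sum_congr rfl fun i _ => ?_
          push_cast
          rw [Finset.sum_mul]
          refine Finset.sum_congr rfl fun b _ => ?_
          ring
      _ = 0 := by simp [h0]
end FT

namespace FT

lemma bin_nat (n k : ℕ) : (descPochhammer ℂ k).eval (n : ℂ) / (k.factorial : ℂ) = (n.choose k : ℂ) := by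
  rw [descPochhammer_eval_eq_descFactorial, Nat.descFactorial_eq_factorial_mul_choose]
  push_cast
  have : (k.factorial : ℂ) ≠ 0 := by exact_mod_cast Nat.factorial_ne_zero k
  field_simp

lemma bin_bound (z : ℂ) (k : ℕ) (B : ℝ) (h : ‖z‖ + k ≤ B) :
    ‖(descPochhammer ℂ k).eval z / (k.factorial : ℂ)‖ ≤ B ^ k / k.factorial := by
  rw [norm_div, Complex.norm_natCast, descPochhammer_eval_eq_prod_range, norm_prod]
  gcongr
  calc ∏ j ∈ Finset.range k, ‖z - j‖ ≤ ∏ j ∈ Finset.range k, B := by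
        refine Finset.prod_le_prod (fun _ _ => norm_nonneg _) fun j hj => ?_
        have : (j : ℝ) ≤ k := by exact_mod_cast (Finset.mem_range.1 hj).le
        calc ‖z - j‖ ≤ ‖z‖ + ‖(j : ℂ)‖ := norm_sub_le _ _
          _ = ‖z‖ + j := by rw [Complex.norm_natCast]
          _ ≤ B := by linarith
    _ = B ^ k := by simp

lemma sum_bound {E : Type*} [SeminormedAddCommGroup E] (K L : ℕ) (g : ℕ → ℕ → E) (b : ℝ)
    (h : ∀ k < K, ∀ l < L, ‖g k l‖ ≤ b) :
    ‖∑ k ∈ Finset.range K, ∑ l ∈ Finset.range L, g k l‖ ≤ K * L * b := by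
  calc _ ≤ ∑ k ∈ Finset.range K, ‖∑ l ∈ Finset.range L, g k l‖ := norm_sum_le _ _
    _ ≤ ∑ k ∈ Finset.range K, ∑ l ∈ Finset.range L, ‖g k l‖ :=
        Finset.sum_le_sum fun k _ => norm_sum_le _ _
    _ ≤ ∑ k ∈ Finset.range K, ∑ l ∈ Finset.range L, b :=
        Finset.sum_le_sum fun k hk => Finset.sum_le_sum fun l hl =>
          h k (Finset.mem_range.1 hk) l (Finset.mem_range.1 hl)
    _ = K * L * b := by simp; ring

noncomputable def VV (p : ℕ → ℕ → ℤ) (K L M : ℕ) (X η : ℝ) (r s : ℕ) : ℝ :=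
  ∑ k ∈ Finset.range K, ∑ l ∈ Finset.range L,
    (p k l : ℝ) * (((M * s + r).choose k : ℝ) * (X ^ (r * l) * η ^ (s * l)))

lemma ana (K L R R1 S M : ℕ) (p : ℕ → ℕ → ℤ) (Pb : ℝ) (hp : ∀ k l, |(p k l : ℝ)| ≤ Pb)
    (X η : ℝ) (hX : 0 < X) (hη : 0 < η) (T : ℝ) (hT1 : |Real.log X| * M ≤ T)
    (hT2 : |Real.log η| ≤ T) (δ : ℝ) (hδ : Real.log η = M * Real.log X + δ)
    (hδ1 : S * L * |δ| ≤ 1) (BB : ℝ)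
    (hBB : ∀ k < K, (22 * (M * S : ℝ)) ^ k / k.factorial ≤ BB)
    (hR : 0 < R) (hRR : R ≤ R1) (hR1 : R1 ≤ M) (hS : 0 < S) (hKM : K ≤ M * S)
    (hV : ∀ r < R, ∀ s < S, VV p K L M X η r s = 0) :
    ∀ r < R1, ∀ s < S, |VV p K L M X η r s| ≤
      K * L * (Pb * (BB * Real.exp (21 * T * L * S))) * (1 / 20) ^ (R * S) +
      (2 * ((R * S : ℕ) * ((44 * (M * S : ℝ)) ^ (R * S - 1) / (R * S - 1).factorial)) + 1) *
        (K * L * (Pb * (BB * (Real.exp (2 * T * L * S) * (2 * (S * L * |δ|)))))) := by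
  classical
  set a := Real.log X with ha
  set E : ℝ := K * L * (Pb * (BB * (Real.exp (2 * T * L * S) * (2 * (S * L * |δ|))))) with hE
  have hM : 0 < M := by omega
  have hM' : (0 : ℝ) < M := by exact_mod_cast hM
  have hS' : (1 : ℝ) ≤ S := by exact_mod_cast hS
  have hPb : 0 ≤ Pb := (abs_nonneg _).trans (hp 0 0)
  have hT : 0 ≤ T := (abs_nonneg _).trans hT2
  let f : ℂ → ℂ := fun z => ∑ k ∈ Finset.range K, ∑ l ∈ Finset.range L,
    (p k l : ℂ) * ((descPochhammer ℂ k).eval z / (k.factorial : ℂ) * Complex.exp (l * a * z))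
  have hf : Differentiable ℂ f := by
    have : ∀ k, Differentiable ℂ fun z : ℂ => (descPochhammer ℂ k).eval z :=
      fun k => (descPochhammer ℂ k).differentiable
    intro z
    simp only [f]
    have := fun k => this k z
    fun_prop (disch := assumption)
  have hlt : ∀ r < R1, ∀ s < S, M * s + r ≤ M * S := by
    intro r hr s hs
    calc M * s + r ≤ M * s + M := by omega
      _ = M * (s + 1) := by ring
      _ ≤ M * S := Nat.mul_le_mul_left _ hs
  -- f at nodes
  have hfn : ∀ n : ℕ, f n = ((∑ k ∈ Finset.range K, ∑ l ∈ Finset.range L,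
      (p k l : ℝ) * ((n.choose k : ℝ) * Real.exp (l * a * n)) : ℝ) : ℂ) := by
    intro n
    simp only [f]
    push_cast
    simp_rw [bin_nat]
  have hchoose : ∀ n, n ≤ M * S → ∀ k < K, (n.choose k : ℝ) ≤ BB := by
    intro n hn k hk
    refine le_trans ?_ (hBB k hk)
    refine (Nat.choose_le_pow_div k n).trans ?_
    gcongr
    have : (n : ℝ) ≤ M * S := by exact_mod_cast hn
    have h0 : (0 : ℝ) ≤ M * S := by positivity
    linarith
  have hBB0 : 0 < K → 0 ≤ BB := fun h => le_trans (by positivity) (hBB 0 h)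
  have hdiff : ∀ r < R1, ∀ s < S, ‖f ((M * s + r : ℕ) : ℂ) - (VV p K L M X η r s : ℂ)‖ ≤ E := by
    intro r hr s hs
    rw [hfn, ← Complex.ofReal_sub, Complex.norm_real, VV, ← Finset.sum_sub_distrib]
    simp_rw [← Finset.sum_sub_distrib]
    apply sum_bound
    intro k hk l hl
    have hX' : X = Real.exp a := (Real.exp_log hX).symm
    have hη' : η = Real.exp (Real.log η) := (Real.exp_log hη).symm
    have hY : X ^ (r * l) * η ^ (s * l) = Real.exp (l * (a * r + s * Real.log η)) := by
      rw [hX', hη', ← Real.exp_nat_mul, ← Real.exp_nat_mul, ← Real.exp_add, Real.log_exp]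
      congr 1
      push_cast; ring
    have hY2 : Real.exp (l * a * ((M * s + r : ℕ) : ℝ)) =
        Real.exp (l * (a * r + s * Real.log η)) * Real.exp (-(s * l * δ)) := by
      rw [← Real.exp_add, hδ]
      congr 1
      push_cast; ring
    rw [hY, hY2, ← mul_sub, ← mul_sub, norm_mul, norm_mul, Real.norm_eq_abs, Real.norm_eq_abs,
      Nat.abs_cast]
    have hss : (s : ℝ) ≤ S := by exact_mod_cast hs.le
    have hll : (l : ℝ) ≤ L := by exact_mod_cast hl.le
    have hrM : (r : ℝ) ≤ M := by exact_mod_cast (by omega : r ≤ M)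
    have habs : |-(s * l * δ)| ≤ S * L * |δ| := by
      rw [abs_neg, abs_mul, abs_mul, Nat.abs_cast, Nat.abs_cast]
      gcongr
    have h2 : |Real.exp (-(s * l * δ)) - 1| ≤ 2 * (S * L * |δ|) :=
      (Real.abs_exp_sub_one_le (habs.trans hδ1)).trans (by gcongr)
    have h3 : Real.exp (l * (a * r + s * Real.log η)) ≤ Real.exp (2 * T * L * S) := by
      apply Real.exp_le_exp.2
      have e1 : a * r ≤ T := by
        calc a * r ≤ |a| * r := by gcongr; exact le_abs_self _
          _ ≤ |a| * M := by gcongr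
          _ ≤ T := hT1
      have e2 : s * Real.log η ≤ S * T := by
        calc s * Real.log η ≤ s * |Real.log η| := by gcongr; exact le_abs_self _
          _ ≤ S * T := by gcongr
      calc l * (a * r + s * Real.log η) ≤ l * (T + S * T) := by gcongr
        _ ≤ L * (T + S * T) := by gcongr
        _ ≤ L * (S * T + S * T) := by gcongr; nlinarith
        _ = 2 * T * L * S := by ring
    gcongr ?_ * (?_ * ?_)
    · exact hp k l
    · exact hBB0 (by omega)
    · exact hchoose _ (hlt r hr s hs) k hk
    · rw [show Real.exp (l * (a * r + s * Real.log η)) * Real.exp (-(s * l * δ)) -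
        Real.exp (l * (a * r + s * Real.log η)) = Real.exp (l * (a * r + s * Real.log η)) *
          (Real.exp (-(s * l * δ)) - 1) by ring, norm_mul, Real.norm_eq_abs, Real.norm_eq_abs, Real.abs_exp]
      gcongr
  -- nodes
  let nodes : Finset ℕ := (Finset.range R ×ˢ Finset.range S).image (fun x => M * x.2 + x.1)
  have hinj : Set.InjOn (fun x : ℕ × ℕ => M * x.2 + x.1) (Finset.range R ×ˢ Finset.range S : Finset (ℕ × ℕ)) := by
    rintro ⟨r, s⟩ h ⟨r', s'⟩ h' he
    simp only [Finset.coe_product, Finset.coe_range, Set.mem_prod, Set.mem_Iio] at h h' he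
    have e1 : (M * s + r) / M = s := by
      rw [Nat.mul_add_div hM, Nat.div_eq_of_lt (by omega)]; rfl
    have e2 : (M * s' + r') / M = s' := by
      rw [Nat.mul_add_div hM, Nat.div_eq_of_lt (by omega)]; rfl
    have e3 : s = s' := by rw [← e1, ← e2, he]
    subst e3
    simpa using he
  have hcard : nodes.card = R * S := by
    rw [Finset.card_image_of_injOn hinj]; simp
  have hE0 : 0 ≤ E := (norm_nonneg _).trans (hdiff 0 (by omega) 0 hS)
  intro r hr s hs
  have hZ : (0 : ℝ) < M * S := by positivity
  have := approx_schwarz f hf nodes (M * S) hZ ?_ (K * L * (Pb * (BB * Real.exp (21 * T * L * S)))) E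
    ?_ ?_ (M * s + r) ?_ ?_ hE0
  · rw [hcard] at this
    have hd := hdiff r hr s hs
    calc |VV p K L M X η r s| = ‖(VV p K L M X η r s : ℂ)‖ := by
          rw [Complex.norm_real, Real.norm_eq_abs]
      _ = ‖f ((M * s + r : ℕ) : ℂ) - (f ((M * s + r : ℕ) : ℂ) - (VV p K L M X η r s : ℂ))‖ := by
          congr 1; ring
      _ ≤ ‖f ((M * s + r : ℕ) : ℂ)‖ + ‖f ((M * s + r : ℕ) : ℂ) - (VV p K L M X η r s : ℂ)‖ :=
          norm_sub_le _ _
      _ ≤ _ + E := add_le_add this hd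
      _ = _ := by ring
  · intro n hn
    obtain ⟨⟨r, s⟩, h, rfl⟩ := Finset.mem_image.1 hn
    simp only [Finset.mem_product, Finset.mem_range] at h
    exact_mod_cast hlt r (by omega) s h.2
  · intro z hz
    apply sum_bound
    intro k hk l hl
    rw [norm_mul, norm_mul, Complex.norm_intCast]
    have hKZ : (k : ℝ) ≤ M * S := by exact_mod_cast (by omega : k ≤ M * S)
    have hll : (l : ℝ) ≤ L := by exact_mod_cast hl.le
    gcongr ?_ * (?_ * ?_)
    · exact hp k l
    · exact hBB0 (by omega)
    · exact (bin_bound z k (22 * (M * S)) (by linarith)).trans (hBB k hk)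
    · refine (Complex.norm_exp_le_exp_norm _).trans (Real.exp_le_exp.2 ?_)
      rw [norm_mul, norm_mul, hz, Complex.norm_natCast, Complex.norm_real, Real.norm_eq_abs]
      calc (l : ℝ) * |a| * (21 * (M * S)) ≤ L * |a| * (21 * (M * S)) := by gcongr
        _ = 21 * L * S * (|a| * M) := by ring
        _ ≤ 21 * L * S * T := by gcongr
        _ = 21 * T * L * S := by ring
  · intro n hn
    obtain ⟨⟨r, s⟩, h, rfl⟩ := Finset.mem_image.1 hn
    simp only [Finset.mem_product, Finset.mem_range] at h
    have hd := hdiff r (by omega) s h.2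
    rw [hV r h.1 s h.2] at hd
    simpa using hd
  · exact_mod_cast hlt r hr s hs
  · rw [hcard]; exact Nat.mul_pos hR hS
end FT

namespace FT
open Polynomial in
lemma vv_zero (p : ℕ → ℕ → ℤ) (K L M R1 R2 S : ℕ) (hK : 0 < K) (X η : ℝ) (hX : 0 < X) (hX1 : X ≠ 1)
    (hη : 0 < η) (hR2 : R2 ≤ M) (hR1 : R2 + L ≤ R1) (hc : K * L ≤ R2 * S) (hM : 0 < M)
    (hV : ∀ r < R1, ∀ s < S, VV p K L M X η r s = 0) : ∀ k < K, ∀ l < L, p k l = 0 := by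
  classical
  let P : ℕ → ℝ[X] := fun l => ∑ k ∈ Finset.range K,
    C ((p k l : ℝ) / (k.factorial : ℝ)) * descPochhammer ℝ k
  have hPe : ∀ l n : ℕ, (P l).eval (n : ℝ) = ∑ k ∈ Finset.range K, (p k l : ℝ) * (n.choose k : ℝ) := by
    intro l n
    simp only [P]
    rw [eval_finsetSum]
    refine Finset.sum_congr rfl fun k _ => ?_
    rw [eval_mul, eval_C, descPochhammer_eval_eq_descFactorial,
      Nat.descFactorial_eq_factorial_mul_choose]
    push_cast
    have : (k.factorial : ℝ) ≠ 0 := by exact_mod_cast Nat.factorial_ne_zero k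
    field_simp
  have hdeg : ∀ l, l < L → (P l).natDegree < K := by
    intro l _
    have : (P l).natDegree ≤ K - 1 := by
      apply natDegree_sum_le_of_forall_le
      intro k hk
      refine (natDegree_C_mul_le _ _).trans ?_
      rw [descPochhammer_natDegree]
      have := Finset.mem_range.1 hk
      omega
    omega
  let pts : Finset ℕ := (Finset.range R2 ×ˢ Finset.range S).image (fun x => M * x.2 + x.1)
  have hinj : Set.InjOn (fun x : ℕ × ℕ => M * x.2 + x.1) (Finset.range R2 ×ˢ Finset.range S : Finset (ℕ × ℕ)) := by
    rintro ⟨r, s⟩ h ⟨r', s'⟩ h' he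
    simp only [Finset.coe_product, Finset.coe_range, Set.mem_prod, Set.mem_Iio] at h h' he
    have e1 : (M * s + r) / M = s := by
      rw [Nat.mul_add_div hM, Nat.div_eq_of_lt (by omega)]; rfl
    have e2 : (M * s' + r') / M = s' := by
      rw [Nat.mul_add_div hM, Nat.div_eq_of_lt (by omega)]; rfl
    have e3 : s = s' := by rw [← e1, ← e2, he]
    subst e3
    simpa using he
  have hcard : pts.card = R2 * S := by
    rw [Finset.card_image_of_injOn hinj]; simp
  have hP0 := zero_est K L P hdeg X hX hX1 pts (by rw [hcard]; exact hc) (by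
    intro z hz
    obtain ⟨⟨r, s⟩, h, rfl⟩ := Finset.mem_image.1 hz
    simp only [Finset.mem_product, Finset.mem_range] at h
    refine ⟨X ^ r * η ^ s, by positivity, ?_⟩
    intro i hi
    have h0 := hV (r + i) (by omega) s h.2
    rw [VV, Finset.sum_comm] at h0
    rw [← h0]
    refine Finset.sum_congr rfl fun l _ => ?_
    have : (((M * s + r : ℕ) : ℝ) + i) = ((M * s + (r + i) : ℕ) : ℝ) := by push_cast; ring
    rw [this, hPe, Finset.sum_mul]
    refine Finset.sum_congr rfl fun k _ => ?_
    have : X ^ (i * l) * (X ^ r * η ^ s) ^ l = X ^ ((r + i) * l) * η ^ (s * l) := by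
      rw [mul_pow, ← pow_mul, ← pow_mul, add_mul, pow_add]; ring
    rw [this]; ring)
  intro k
  induction k using Nat.strong_induction_on with
  | _ k ih =>
    intro hk l hl
    have h := hPe l k
    rw [hP0 l hl, eval_zero, Finset.sum_eq_single k] at h
    · simpa using h.symm
    · intro j hj hjk
      rcases lt_or_gt_of_ne hjk with h1 | h1
      · rw [ih j h1 (Finset.mem_range.1 hj) l hl]; simp
      · rw [Nat.choose_eq_zero_of_lt h1]; simp
    · intro h; exact absurd (Finset.mem_range.2 hk) h

lemma pow_div_fact (M t : ℝ) (K k : ℕ) (hk : k ≤ K) (ht : 0 ≤ t) (hM : 3 ≤ M) (h : 3 * t ≤ M * K) :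
    t ^ k / k.factorial ≤ M ^ K := by
  have hl : (1 : ℝ) ≤ M / 3 := by linarith
  have h1 : (t / (M / 3)) ^ k / k.factorial ≤ Real.exp (t / (M / 3)) :=
    Real.pow_div_factorial_le_exp _ (by positivity) k
  have h2 : t / (M / 3) ≤ K := by
    rw [div_le_iff₀ (by linarith)]; linarith
  have h3 : Real.exp (K : ℝ) ≤ 3 ^ K := by
    rw [← mul_one (K : ℝ), Real.exp_nat_mul]
    gcongr
    exact Real.exp_one_lt_three.le
  calc t ^ k / k.factorial = (M / 3) ^ k * ((t / (M / 3)) ^ k / k.factorial) := by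
        rw [div_pow t]; field_simp
    _ ≤ (M / 3) ^ K * 3 ^ K := by
        gcongr
        exact h1.trans ((Real.exp_le_exp.2 h2).trans h3)
    _ = M ^ K := by rw [← mul_pow]; congr 1; ring

lemma rep_smul {α w b : ℝ} (t : ℕ) (P : ℝ) (hP : (t : ℝ) ≤ P) (h : ZRep α w b) :
    ZRep α ((t : ℝ) * w) (P * b) := by
  have := rep_sum (α := α) (Finset.univ : Finset Unit) (fun _ => (t : ℤ)) (fun _ => w) b P
    (by intro _ _; simpa using hP) (fun _ _ => h)
  simpa using this

lemma rep_alpha (α : ℝ) : ZRep α α 1 := by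
  refine ⟨![0, 1, 0, 0, 0, 0], ?_, ?_⟩
  · simp [Fin.sum_univ_six, bas]
  · intro i; fin_cases i <;> simp

lemma rep_psi (α : ℝ) : ZRep α (Real.goldenRatio - 1) 1 := by
  refine ⟨![-1, 0, 0, 1, 0, 0], ?_, ?_⟩
  · simp [Fin.sum_univ_six, bas]; ring
  · intro i; fin_cases i <;> simp

lemma rep_sqrt5 (α : ℝ) : ZRep α (√5) 2 := by
  refine ⟨![-1, 0, 0, 2, 0, 0], ?_, ?_⟩
  · simp [Fin.sum_univ_six, bas, Real.goldenRatio]; ring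
  · intro i; fin_cases i <;> simp

/-- representation of the entries -/
lemma rep_entry {α : ℝ} (hα : α ^ 3 = α ^ 2 + α + 1) (x y : ℕ) (ζ Bz : ℝ) (hz : ZRep α ζ Bz)
    (hBz : 2 ≤ Bz) (L S R : ℕ) (c : ℕ) (Cb : ℝ) (hc : (c : ℝ) ≤ Cb) (r l s : ℕ) (hr : r ≤ R)
    (hl : l < L) (hs : s ≤ S) :
    ZRep α ((c : ℝ) * ((α ^ y * (Real.goldenRatio - 1) ^ x) ^ (r * l) *
      (√5 ^ (L - 1 - l) * ζ ^ l) ^ s))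
      (Cb * (21 ^ ((x + y) * (R * L) + 3) * (21 * Bz) ^ (L * S))) := by
  have hCb : 0 ≤ Cb := (Nat.cast_nonneg _).trans hc
  refine rep_smul c Cb hc ?_
  have e1 : (α ^ y * (Real.goldenRatio - 1) ^ x) ^ (r * l) *
      (√5 ^ (L - 1 - l) * ζ ^ l) ^ s =
      (α ^ (y * (r * l)) * (Real.goldenRatio - 1) ^ (x * (r * l))) *
      (√5 ^ ((L - 1 - l) * s) * ζ ^ (l * s)) := by
    rw [mul_pow, mul_pow, ← pow_mul, ← pow_mul, ← pow_mul, ← pow_mul]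
  rw [e1]
  refine rep_mono (rep_mul hα (rep_mul hα (rep_pow hα (rep_alpha α) _) (rep_pow hα (rep_psi α) _))
    (rep_mul hα (rep_pow hα (rep_sqrt5 α) _) (rep_pow hα hz _))) ?_
  have hrl : r * l ≤ R * L := Nat.mul_le_mul hr hl.le
  have hls : (L - 1 - l) * s + l * s ≤ L * S := by
    rw [← add_mul]; exact Nat.mul_le_mul (by omega) hs
  have h1 : (21 : ℝ) ^ (y * (r * l)) * 21 ^ (x * (r * l)) ≤ 21 ^ ((x + y) * (R * L)) := by
    rw [← pow_add]
    apply pow_le_pow_right₀ (by norm_num)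
    rw [← add_mul, add_comm y x]
    exact Nat.mul_le_mul_left _ hrl
  have h2 : (21 * 2 : ℝ) ^ ((L - 1 - l) * s) * (21 * Bz) ^ (l * s) ≤ (21 * Bz) ^ (L * S) := by
    calc _ ≤ (21 * Bz) ^ ((L - 1 - l) * s) * (21 * Bz) ^ (l * s) := by gcongr
      _ = (21 * Bz) ^ ((L - 1 - l) * s + l * s) := by rw [pow_add]
      _ ≤ _ := pow_le_pow_right₀ (by linarith) hls
  simp only [mul_one]
  calc 21 * (21 * ((21 : ℝ) ^ (y * (r * l)) * 21 ^ (x * (r * l))) *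
        (21 * ((21 * 2 : ℝ) ^ ((L - 1 - l) * s) * (21 * Bz) ^ (l * s))))
      ≤ 21 * (21 * (21 ^ ((x + y) * (R * L))) * (21 * ((21 * Bz) ^ (L * S)))) := by gcongr
    _ = _ := by rw [pow_add]; ring
end FT

namespace FT

lemma mexp {a b s t : ℝ} (ha : a ≤ Real.exp s) (hb : b ≤ Real.exp t) (hb0 : 0 ≤ b) :
    a * b ≤ Real.exp (s + t) := by
  rw [Real.exp_add]
  exact mul_le_mul ha hb hb0 (Real.exp_pos _).le

lemma pexp {a s : ℝ} (n : ℕ) (ha0 : 0 ≤ a) (ha : a ≤ Real.exp s) : a ^ n ≤ Real.exp (n * s) := by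
  rw [Real.exp_nat_mul]
  gcongr

lemma small_exp (H c : ℝ) (hH : 1 ≤ H) (hc : c ≤ 10 ^ 17) : c * H ≤ Real.exp (10 ^ 9 * H) := by
  have h1 : (10 : ℝ) ^ 17 ≤ Real.exp 40 := by
    rw [show (40 : ℝ) = ((40 : ℕ) : ℝ) * 1 by norm_num, Real.exp_nat_mul]
    calc (10 : ℝ) ^ 17 ≤ 2.7 ^ 40 := by norm_num
      _ ≤ _ := by
        gcongr
        have := Real.exp_one_gt_d9
        linarith
  calc c * H ≤ Real.exp 40 * Real.exp H := by
        gcongr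
        · exact hc.trans h1
        · have := Real.add_one_le_exp H; linarith
    _ = Real.exp (40 + H) := by rw [Real.exp_add]
    _ ≤ _ := by apply Real.exp_le_exp.2; linarith

lemma exp21 : (21 : ℝ) ≤ Real.exp 3.05 := by
  have h1 := Real.exp_one_gt_d9
  have h2 := Real.add_one_le_exp (0.05 : ℝ)
  rw [show (3.05 : ℝ) = ((3 : ℕ) : ℝ) * 1 + 0.05 by norm_num, Real.exp_add, Real.exp_nat_mul]
  calc (21 : ℝ) ≤ 2.7182 ^ 3 * 1.05 := by norm_num
    _ ≤ _ := by
      gcongr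
      · linarith
      · linarith

lemma exp20 : (1 / 20 : ℝ) ≤ Real.exp (-2.99) := by
  have h1 := Real.exp_one_lt_d9
  have h2 := Real.add_one_le_exp (0.01 : ℝ)
  have h3 : Real.exp (2.99) * Real.exp (0.01) = Real.exp 1 ^ 3 := by
    rw [← Real.exp_add, ← Real.exp_nat_mul]; norm_num
  have h4 : Real.exp 1 ^ 3 ≤ 2.71829 ^ 3 := by gcongr; linarith
  have h5 : Real.exp 2.99 ≤ 20 := by
    have := Real.exp_pos 2.99
    nlinarith
  rw [Real.exp_neg, one_div]
  gcongr

set_option maxHeartbeats 2000000 in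
theorem core {α : ℝ} (hα : α ^ 3 = α ^ 2 + α + 1) (h0 : 0 < α) (h2 : α ≤ 2) (M x y : ℕ)
    (hH : 1 ≤ x + y) (hM1 : 520000000 ≤ M) (hM2 : (M : ℝ) ≤ Real.exp 42) (η ζ Bz : ℝ) (hη : 0 < η)
    (hζ : ζ = √5 * η) (hz : ZRep α ζ Bz) (hBz : 2 ≤ Bz) (hBz2 : 21 * Bz ≤ Real.exp 165)
    (X : ℝ) (hX : X = α ^ y * (Real.goldenRatio - 1) ^ x) (hX1 : X ≠ 1) (δ : ℝ)
    (hδ : Real.log η = M * Real.log X + δ) (hδ1 : |δ| ≤ Real.exp (-(10 ^ 16 * ((x + y : ℕ) : ℝ))))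
    (hT1 : |Real.log X| * M ≤ 28) (hT2 : |Real.log η| ≤ 28) : False := by
  obtain ⟨H, hHd⟩ : ∃ H, H = x + y := ⟨_, rfl⟩
  rw [← hHd] at hH hδ1
  obtain ⟨L, hL⟩ : ∃ L : ℕ, L = 10000 := ⟨_, rfl⟩
  obtain ⟨R, hR⟩ : ∃ R : ℕ, R = 40000000 := ⟨_, rfl⟩
  obtain ⟨S, hS⟩ : ∃ S : ℕ, S = 4000000 * H := ⟨_, rfl⟩
  obtain ⟨K, hK⟩ : ∃ K : ℕ, K = 192000000000 * H := ⟨_, rfl⟩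
  have hLr : (L : ℝ) = 10000 := by rw [hL]; norm_num
  have hRr : (R : ℝ) = 40000000 := by rw [hR]; norm_num
  have hSr : (S : ℝ) = 4000000 * H := by rw [hS]; push_cast; ring
  have hKr : (K : ℝ) = 192000000000 * H := by rw [hK]; push_cast; ring
  have hHr : (1 : ℝ) ≤ H := by exact_mod_cast hH
  have hMr : (520000000 : ℝ) ≤ M := by exact_mod_cast hM1
  have hφ : 0 < Real.goldenRatio - 1 := by have := Real.one_lt_goldenRatio; linarith
  have hX0 : 0 < X := by rw [hX]; positivity
  have s5 : (0 : ℝ) < √5 := by positivity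
  have hMH : (0 : ℝ) ≤ M * H := by positivity
  -- binomial bound
  have hBB : ∀ k < K, (22 * (M * S : ℝ)) ^ k / k.factorial ≤ (M : ℝ) ^ K := by
    intro k hk
    apply pow_div_fact _ _ _ _ hk.le (by positivity) (by linarith)
    rw [hSr, hKr]
    linarith only [hMH]
  have hch : ∀ r s, r ≤ M → s < S → ∀ k < K, (((M * s + r).choose k : ℕ) : ℝ) ≤ (M : ℝ) ^ K := by
    intro r s hr hs k hk
    refine le_trans ?_ (hBB k hk)
    refine (Nat.choose_le_pow_div k _).trans ?_
    gcongr
    have : M * s + r ≤ M * S := by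
      calc M * s + r ≤ M * (s + 1) := by rw [mul_add, mul_one]; omega
        _ ≤ M * S := Nat.mul_le_mul_left _ hs
    have h1 : ((M * s + r : ℕ) : ℝ) ≤ M * S := by exact_mod_cast this
    have h3 : (0 : ℝ) ≤ M * S := by positivity
    linarith
  let w : ℕ → ℕ → ℕ → ℕ → ℝ := fun r s k l => (((M * s + r).choose k : ℕ) : ℝ) *
    ((α ^ y * (Real.goldenRatio - 1) ^ x) ^ (r * l) * (√5 ^ (L - 1 - l) * ζ ^ l) ^ s)
  have hwrep : ∀ R' : ℕ, R' ≤ M → ∀ r < R', ∀ s < S, ∀ k < K, ∀ l < L, ZRep α (w r s k l)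
      ((M : ℝ) ^ K * (21 ^ (H * (R' * L) + 3) * (21 * Bz) ^ (L * S))) := by
    intro R' hR' r hr s hs k hk l hl
    rw [hHd]
    exact rep_entry hα x y ζ Bz hz hBz L S R' _ _ (hch r s (by omega) hs k hk) r l s hr.le hl hs.le
  set B0 : ℝ := (M : ℝ) ^ K * (21 ^ (H * (R * L) + 3) * (21 * Bz) ^ (L * S)) with hB0
  set B1 : ℝ := (M : ℝ) ^ K * (21 ^ (H * ((13 * R) * L) + 3) * (21 * Bz) ^ (L * S)) with hB1
  have hMK1 : (1 : ℝ) ≤ (M : ℝ) ^ K := one_le_pow₀ (by linarith)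
  have hBzp : (1 : ℝ) ≤ (21 * Bz) ^ (L * S) := one_le_pow₀ (by linarith)
  have h21p : ∀ n : ℕ, (1 : ℝ) ≤ 21 ^ n := fun n => one_le_pow₀ (by norm_num)
  have hB01 : 1 ≤ B0 :=
    one_le_mul_of_one_le_of_one_le hMK1 (one_le_mul_of_one_le_of_one_le (h21p _) hBzp)
  have hB11 : 1 ≤ B1 :=
    one_le_mul_of_one_le_of_one_le hMK1 (one_le_mul_of_one_le_of_one_le (h21p _) hBzp)
  obtain ⟨p, ⟨k0, hk0, l0, hl0, hp0⟩, hpB, hpW⟩ := siegel_rep (α := α) R S K L (by omega) (by omega)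
    (by rw [hK, hL, hR, hS]; ring) w B0 hB01 (hwrep R (by omega))
  -- relation of W and V
  have hWV : ∀ r s, ∑ k ∈ Finset.range K, ∑ l ∈ Finset.range L, (p k l : ℝ) * w r s k l =
      √5 ^ ((L - 1) * s) * VV p K L M X η r s := by
    intro r s
    rw [VV, Finset.mul_sum]
    refine Finset.sum_congr rfl fun k _ => ?_
    rw [Finset.mul_sum]
    refine Finset.sum_congr rfl fun l hl => ?_
    have hl' := Finset.mem_range.1 hl
    simp only [w]
    rw [← hX]
    have : (√5 ^ (L - 1 - l) * ζ ^ l) ^ s = √5 ^ ((L - 1) * s) * η ^ (s * l) := by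
      rw [hζ, mul_pow (√5), ← mul_assoc, ← pow_add, Nat.sub_add_cancel (by omega), mul_pow,
        ← pow_mul, ← pow_mul, mul_comm l s]
    rw [this]; ring
  have hVR : ∀ r < R, ∀ s < S, VV p K L M X η r s = 0 := by
    intro r hr s hs
    have := hpW r hr s hs
    rw [hWV] at this
    exact (mul_eq_zero.1 this).resolve_left (by positivity)
  -- numeric bounds
  obtain ⟨u, hu⟩ : ∃ u : ℝ, u = 10 ^ 12 * H := ⟨_, rfl⟩
  have hu1 : 10 ^ 12 ≤ u := by rw [hu]; linarith
  have sm : ∀ c : ℝ, c ≤ 10 ^ 17 → c * H ≤ Real.exp (0.001 * u) := by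
    intro c hc
    refine (small_exp H c hHr hc).trans (le_of_eq ?_)
    rw [hu]; congr 1; ring
  have nKL : (K * L : ℝ) ≤ Real.exp (0.001 * u) := by
    refine le_trans (le_of_eq ?_) (sm 1920000000000000 (by norm_num))
    rw [hKr, hLr]; ring
  have nMK : (M : ℝ) ^ K ≤ Real.exp (8.064 * u) := by
    refine (pexp K (by linarith) hM2).trans (le_of_eq ?_)
    rw [hKr, hu]; congr 1; ring
  have nG : (21 * Bz) ^ (L * S) ≤ Real.exp (6.6 * u) := by
    refine (pexp (L * S) (by linarith) hBz2).trans (le_of_eq ?_)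
    push_cast
    rw [hLr, hSr, hu]; congr 1; ring
  have n21 : (21 : ℝ) ^ (H * (R * L) + 3) ≤ Real.exp (1.221 * u) := by
    refine (pexp _ (by norm_num) exp21).trans (Real.exp_le_exp.2 ?_)
    push_cast
    rw [hLr, hRr]; linarith
  have n21' : (21 : ℝ) ^ (H * ((13 * R) * L) + 3) ≤ Real.exp (15.861 * u) := by
    refine (pexp _ (by norm_num) exp21).trans (Real.exp_le_exp.2 ?_)
    push_cast
    rw [hLr, hRr]; linarith
  have nB0 : B0 ≤ Real.exp (15.9 * u) := by
    refine (mexp nMK (mexp n21 nG (by positivity)) (by positivity)).trans (Real.exp_le_exp.2 ?_)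
    linarith only [hu1]
  have nB1 : B1 ≤ Real.exp (30.6 * u) := by
    refine (mexp nMK (mexp n21' nG (by positivity)) (by positivity)).trans (Real.exp_le_exp.2 ?_)
    linarith only [hu1]
  have nP : K * L * B0 ≤ Real.exp (15.91 * u) := by
    refine (mexp nKL nB0 (by linarith)).trans (Real.exp_le_exp.2 ?_)
    linarith
  have hP0 : 0 ≤ K * L * B0 := by positivity
  have hδu : |δ| ≤ Real.exp (-(10 ^ 4 * u)) := by
    refine hδ1.trans (le_of_eq ?_)
    rw [hu]; congr 1; ring
  have nSL : S * L * |δ| ≤ Real.exp (-(9999 * u)) := by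
    have : (S * L : ℝ) ≤ Real.exp (0.001 * u) := by
      refine le_trans (le_of_eq ?_) (sm 40000000000 (by norm_num))
      rw [hSr, hLr]; ring
    refine (mexp this hδu (abs_nonneg _)).trans (Real.exp_le_exp.2 ?_)
    linarith
  have hana := ana K L R (13 * R) S M p (K * L * B0) hpB X η hX0 hη 28 hT1 hT2 δ hδ
    (nSL.trans (Real.exp_le_one_iff.2 (by linarith))) ((M : ℝ) ^ K) hBB (by omega) (by omega) (by omega)
    (by omega) (by rw [hK, hS, ← mul_assoc]; exact Nat.mul_le_mul_right _ (by omega)) hVR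
  have nA : K * L * (K * L * B0 * ((M : ℝ) ^ K * Real.exp (21 * 28 * L * S))) * (1 / 20) ^ (R * S) ≤
      Real.exp (-(430.7 * u)) := by
    have e1 : Real.exp (21 * 28 * L * S) ≤ Real.exp (23.52 * u) := by
      apply Real.exp_le_exp.2; rw [hLr, hSr, hu]; linarith
    have e2 : (1 / 20 : ℝ) ^ (R * S) ≤ Real.exp (-(478.4 * u)) := by
      refine (pexp _ (by norm_num) exp20).trans (Real.exp_le_exp.2 ?_)
      push_cast
      rw [hRr, hSr, hu]; linarith
    refine (mexp (mexp nKL (mexp nP (mexp nMK e1 (by positivity)) (by positivity)) (by positivity)) e2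
      (by positivity)).trans (Real.exp_le_exp.2 ?_)
    linarith only [hu1]
  have nE : (2 * ((R * S : ℕ) * ((44 * (M * S : ℝ)) ^ (R * S - 1) / (R * S - 1).factorial)) + 1) *
        (K * L * (K * L * B0 * ((M : ℝ) ^ K * (Real.exp (2 * 28 * L * S) * (2 * (S * L * |δ|)))))) ≤
      Real.exp (-(430.7 * u)) := by
    have hRSr : ((R * S : ℕ) : ℝ) = 160000000000000 * H := by push_cast; rw [hRr, hSr]; ring
    have e1 : (44 * (M * S : ℝ)) ^ (R * S - 1) / (R * S - 1).factorial ≤ (M : ℝ) ^ (R * S) := by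
      apply pow_div_fact _ _ _ _ (Nat.sub_le _ _) (by positivity) (by linarith)
      rw [hRSr, hSr]; linarith only [hMH]
    have e2 : (M : ℝ) ^ (R * S) ≤ Real.exp (6720 * u) := by
      refine (pexp _ (by linarith) hM2).trans (le_of_eq ?_)
      rw [hRSr, hu]; congr 1; ring
    have e3 : (1 : ℝ) ≤ (M : ℝ) ^ (R * S) := one_le_pow₀ (by linarith)
    have e4 : 2 * ((R * S : ℕ) * ((44 * (M * S : ℝ)) ^ (R * S - 1) / (R * S - 1).factorial)) + 1 ≤
        Real.exp (6721 * u) := by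
      calc _ ≤ 2 * ((R * S : ℕ) * (M : ℝ) ^ (R * S)) + H * (M : ℝ) ^ (R * S) := by
            gcongr; exact one_le_mul_of_one_le_of_one_le hHr e3
        _ = (320000000000001 * H) * (M : ℝ) ^ (R * S) := by rw [hRSr]; ring
        _ ≤ _ := mexp (sm _ (by norm_num)) e2 (by positivity)
        _ ≤ _ := Real.exp_le_exp.2 (by linarith)
    have e5 : Real.exp (2 * 28 * L * S) ≤ Real.exp (2.24 * u) := by
      apply Real.exp_le_exp.2; rw [hLr, hSr, hu]; linarith
    have e6 : 2 * (S * L * |δ|) ≤ Real.exp (0.001 * u + -(9999 * u)) := by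
      refine mexp ?_ nSL (by positivity)
      have := sm 2 (by norm_num)
      linarith
    refine (mexp e4 (mexp nKL (mexp nP (mexp nMK (mexp e5 e6 (by positivity)) (by positivity))
      (by positivity)) (by positivity)) (by positivity)).trans (Real.exp_le_exp.2 ?_)
    linarith only [hu1]
  have hVall : ∀ r < 13 * R, ∀ s < S, VV p K L M X η r s = 0 := by
    intro r hr s hs
    by_contra hne
    have hv := (hana r hr s hs).trans (add_le_add nA nE)
    have hv2 : |VV p K L M X η r s| ≤ Real.exp (-(430.6 * u)) := by
      refine hv.trans ?_
      rw [← two_mul]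
      refine (mexp (s := 0.001 * u) (b := Real.exp (-(430.7 * u))) ?_ le_rfl (Real.exp_pos _).le).trans
        (Real.exp_le_exp.2 (by linarith))
      have := sm 2 (by norm_num)
      linarith
    have hWne : √5 ^ ((L - 1) * s) * VV p K L M X η r s ≠ 0 := mul_ne_zero (by positivity) hne
    have hrep : ZRep α (√5 ^ ((L - 1) * s) * VV p K L M X η r s) (K * L * (K * L * B0 * B1)) := by
      rw [← hWV, ← Finset.sum_product']
      have := rep_sum (α := α) (Finset.range K ×ˢ Finset.range L) (fun b => p b.1 b.2)
        (fun b => w r s b.1 b.2) B1 (K * L * B0) (fun b _ => hpB _ _) (by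
          intro b hb
          simp only [Finset.mem_product, Finset.mem_range] at hb
          exact hwrep (13 * R) (by omega) r hr s hs _ hb.1 _ hb.2)
      rw [Finset.card_product, Finset.card_range, Finset.card_range] at this
      push_cast at this
      exact this
    obtain ⟨c, hc1, hc2⟩ := hrep
    have hc0 : c ≠ 0 := by
      rintro rfl
      apply hWne; rw [hc1]; simp
    have hli := liouville hα h0.le h2 c hc1 hc2 hc0
    have nBW : K * L * (K * L * B0 * B1) ≤ Real.exp (46.6 * u) := by
      refine (mexp nKL (mexp nP nB1 (by linarith)) (by positivity)).trans (Real.exp_le_exp.2 ?_)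
      linarith
    have hBW0 : 0 ≤ K * L * (K * L * B0 * B1) := by positivity
    have n10 : (10 : ℝ) ^ 10 ≤ Real.exp (0.001 * u) := by
      have := sm (10 ^ 10) (by norm_num)
      linarith
    have n5 : √5 ^ ((L - 1) * s) ≤ Real.exp (0.13 * u) := by
      have h53 : √5 ≤ Real.exp 3.05 := by
        refine le_trans ?_ exp21
        rw [Real.sqrt_le_left (by norm_num)]; norm_num
      refine (pexp _ s5.le h53).trans (Real.exp_le_exp.2 ?_)
      have : ((L - 1) * s) ≤ L * S := Nat.mul_le_mul (by omega) hs.le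
      have h' : (((L - 1) * s : ℕ) : ℝ) ≤ L * S := by exact_mod_cast this
      rw [hLr, hSr] at h'
      rw [hu]
      linarith
    have nW : |√5 ^ ((L - 1) * s) * VV p K L M X η r s| ≤ Real.exp (0.13 * u + -(430.6 * u)) := by
      rw [abs_mul, abs_of_pos (by positivity)]
      exact mexp n5 hv2 (abs_nonneg _)
    have := mexp nW (mexp n10 (pexp 5 hBW0 nBW) (by positivity)) (by positivity)
    have h1 := hli.trans this
    rw [← Real.exp_zero, Real.exp_le_exp] at h1
    push_cast at h1
    linarith only [h1, hu1]
  exact hp0 (vv_zero p K L M (13 * R) (12 * R) S (by omega) X η hX0 hX1 hη (by omega) (by omega)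
    (by rw [hK, hL, hR, hS]; apply le_of_eq; ring) (by omega) hVall k0 hk0 l0 hl0)
end FT

namespace FT

lemma exists_alpha : ∃ α : ℝ, α ^ 3 = α ^ 2 + α + 1 ∧ 1.83 < α ∧ α < 1.84 := by
  have hc : ContinuousOn (fun t : ℝ => t ^ 3 - t ^ 2 - t - 1) (Set.Icc 1.83 1.84) := by fun_prop
  have := intermediate_value_Ioo (by norm_num) hc
  obtain ⟨a, ha, h⟩ := this (show (0 : ℝ) ∈ _ by constructor <;> norm_num)
  refine ⟨a, ?_, ha.1, ha.2⟩
  simp only at h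
  linarith

/-- asymptotics of the Tribonacci numbers -/
lemma trib_asym {α : ℝ} (hα : α ^ 3 = α ^ 2 + α + 1) (h1 : 1.83 < α) (h2 : α < 1.84) (m : ℕ) :
    |(trib m : ℝ) - α / (3 * α ^ 2 - 2 * α - 1) * α ^ m| ≤ 1 := by
  have hD : 0 < 3 * α ^ 2 - 2 * α - 1 := by nlinarith
  obtain ⟨c, hc⟩ : ∃ c, c = α / (3 * α ^ 2 - 2 * α - 1) := ⟨_, rfl⟩
  have hcD : c * (3 * α ^ 2 - 2 * α - 1) = α := by rw [hc]; exact div_mul_cancel₀ _ hD.ne'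
  rw [← hc]
  obtain ⟨e, hed⟩ : ∃ e : ℕ → ℝ, ∀ m, e m = (trib m : ℝ) - c * α ^ m := ⟨_, fun _ => rfl⟩
  have he3 : ∀ m, e (m + 3) = e (m + 2) + e (m + 1) + e m := by
    intro m
    have : (trib (m + 3) : ℝ) = trib (m + 2) + trib (m + 1) + trib m := by
      rw [trib]; push_cast; ring
    simp only [hed]
    rw [this, pow_add, hα]; ring
  have he2 : ∀ m, e (m + 2) = -(α - 1) * e (m + 1) - (α ^ 2 - α - 1) * e m := by
    intro m
    induction m with
    | zero =>
      simp only [hed, trib]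
      push_cast
      linear_combination -hcD
    | succ m ih =>
      rw [he3, ih]
      linear_combination -(e m) * hα
  have hQ : ∀ m, e (m + 1) ^ 2 + (α - 1) * e (m + 1) * e m + (α ^ 2 - α - 1) * e m ^ 2 ≤
      e 1 ^ 2 + (α - 1) * e 1 * e 0 + (α ^ 2 - α - 1) * e 0 ^ 2 := by
    intro m
    induction m with
    | zero => exact le_refl _
    | succ m ih =>
      refine le_trans ?_ ih
      have hQ0 : 0 ≤ e (m + 1) ^ 2 + (α - 1) * e (m + 1) * e m + (α ^ 2 - α - 1) * e m ^ 2 := by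
        have : 0 ≤ (α ^ 2 - α - 1) - (α - 1) ^ 2 / 4 := by nlinarith only [h1, h2]
        have h3 := mul_nonneg this (sq_nonneg (e m))
        linarith only [h3, sq_nonneg (e (m + 1) + (α - 1) / 2 * e m)]
      rw [show m + 1 + 1 = m + 2 from rfl, he2]
      have : (-(α - 1) * e (m + 1) - (α ^ 2 - α - 1) * e m) ^ 2 +
          (α - 1) * (-(α - 1) * e (m + 1) - (α ^ 2 - α - 1) * e m) * e (m + 1) +
          (α ^ 2 - α - 1) * e (m + 1) ^ 2 = (α ^ 2 - α - 1) *
          (e (m + 1) ^ 2 + (α - 1) * e (m + 1) * e m + (α ^ 2 - α - 1) * e m ^ 2) := by ring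
      rw [this]
      have hb : α ^ 2 - α - 1 ≤ 1 := by nlinarith only [h1, h2]
      exact mul_le_of_le_one_left hQ0 hb
  have hcl : 0.32 < c := by
    rw [hc, lt_div_iff₀ hD]; nlinarith only [h1, h2]
  have hcu : c < 0.35 := by
    rw [hc, div_lt_iff₀ hD]; nlinarith only [h1, h2]
  have h00 : e 0 = -c := by simp [hed, trib]
  have h11 : e 1 = 1 - c * α := by simp [hed, trib]
  have hm := hQ m
  have e1l : 0.3 < e 1 := by rw [h11]; nlinarith only [h1, h2, hcl, hcu]
  have e1u : e 1 < 0.42 := by rw [h11]; nlinarith only [h1, h2, hcl, hcu]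
  have hbu : α ^ 2 - α - 1 ≤ 0.56 := by nlinarith only [h1, h2]
  have hQ0 : e 1 ^ 2 + (α - 1) * e 1 * e 0 + (α ^ 2 - α - 1) * e 0 ^ 2 ≤ 0.3 := by
    have a1 : e 1 ^ 2 ≤ 0.18 := by nlinarith only [e1l, e1u]
    have a2 : (α - 1) * e 1 * e 0 ≤ 0 := by
      rw [h00]
      have : 0 ≤ (α - 1) * e 1 * c := by
        have : 0 ≤ α - 1 := by linarith
        have : 0 ≤ e 1 := by linarith
        positivity
      linarith
    have a3 : (α ^ 2 - α - 1) * e 0 ^ 2 ≤ 0.56 * 0.1225 := by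
      rw [h00]
      have : (-c) ^ 2 ≤ 0.1225 := by nlinarith only [hcl, hcu]
      exact mul_le_mul hbu this (sq_nonneg _) (by norm_num)
    linarith
  have hpd : 0.3 ≤ (α ^ 2 - α - 1) - (α - 1) ^ 2 / 4 := by nlinarith only [h1, h2]
  have h3 := mul_le_mul_of_nonneg_right hpd (sq_nonneg (e m))
  have h4 : e m ^ 2 ≤ 1 := by
    linarith only [h3, hm, hQ0, sq_nonneg (e (m + 1) + (α - 1) / 2 * e m)]
  rw [← hed]
  exact (sq_le_one_iff_abs_le_one _).1 h4

lemma fib_asym (n : ℕ) : |(Nat.fib n : ℝ) - Real.goldenRatio ^ n / √5| ≤ 1 := by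
  have h5 : (1 : ℝ) ≤ √5 := by rw [Real.one_le_sqrt]; norm_num
  rw [Real.coe_fib_eq]
  rw [show (Real.goldenRatio ^ n - Real.goldenConj ^ n) / √5 - Real.goldenRatio ^ n / √5 =
    -(Real.goldenConj ^ n / √5) by ring, abs_neg, abs_div, abs_pow, abs_of_pos (by linarith : (0 : ℝ) < √5)]
  have hc : |Real.goldenConj| ≤ 1 := by
    rw [abs_le]
    exact ⟨Real.neg_one_lt_goldenConj.le, by have := Real.goldenConj_neg; linarith⟩
  rw [div_le_one (by linarith)]
  exact (pow_le_one₀ (abs_nonneg _) hc).trans h5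

lemma pow_ne {α : ℝ} (hα : α ^ 3 = α ^ 2 + α + 1) (h1 : 1.83 < α) (h2 : α < 1.84) (x y : ℕ)
    (hy : 1 ≤ y) : α ^ y * (Real.goldenRatio - 1) ^ x ≠ 1 := by
  intro h
  have hφ : (Real.goldenRatio - 1) * Real.goldenRatio = 1 := by
    have := Real.goldenRatio_sq; nlinarith
  have h3 : α ^ y = Real.goldenRatio ^ x := by
    calc α ^ y = α ^ y * ((Real.goldenRatio - 1) * Real.goldenRatio) ^ x := by rw [hφ]; simp
      _ = (α ^ y * (Real.goldenRatio - 1) ^ x) * Real.goldenRatio ^ x := by rw [mul_pow]; ring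
      _ = _ := by rw [h, one_mul]
  have hc : ∀ y : ℕ, ∃ a b c : ℤ, 0 ≤ a ∧ 0 ≤ b ∧ 0 ≤ c ∧ 1 ≤ b + c ∧
      α ^ (y + 1) = a + b * α + c * α ^ 2 := by
    intro y
    induction y with
    | zero => exact ⟨0, 1, 0, by simp⟩
    | succ y ih =>
      obtain ⟨a, b, c, ha, hb, hc, hbc, he⟩ := ih
      refine ⟨c, a + c, b + c, hc, by omega, by omega, by omega, ?_⟩
      rw [pow_succ, he]
      push_cast
      linear_combination (c : ℝ) * hα
  have hd : ∀ x : ℕ, ∃ a b : ℤ, Real.goldenRatio ^ x = a + b * Real.goldenRatio := by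
    intro x
    induction x with
    | zero => exact ⟨1, 0, by simp⟩
    | succ x ih =>
      obtain ⟨a, b, he⟩ := ih
      refine ⟨b, a + b, ?_⟩
      rw [pow_succ, he]
      push_cast
      linear_combination (b : ℝ) * Real.goldenRatio_sq
  obtain ⟨a, b, c, ha, hb, hc, hbc, he⟩ := hc (y - 1)
  rw [Nat.sub_add_cancel hy] at he
  obtain ⟨f, g, hfg⟩ := hd x
  have hw : (0 : ℝ) = ∑ i, ((![a - f, b, c, -g, 0, 0] : Fin 6 → ℤ) i : ℝ) * bas α i := by
    simp [Fin.sum_univ_six, bas]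
    linear_combination -(h3 - he + hfg)
  have := liouville hα (by linarith) (by linarith) (![a - f, b, c, -g, 0, 0] : Fin 6 → ℤ)
    (w := 0) (B := ∑ i, |((![a - f, b, c, -g, 0, 0] : Fin 6 → ℤ) i : ℝ)|) hw
    (fun i => Finset.single_le_sum (f := fun i => |((![a - f, b, c, -g, 0, 0] : Fin 6 → ℤ) i : ℝ)|)
      (fun _ _ => abs_nonneg _) (Finset.mem_univ i)) (by
      intro h0
      have e1 : b = 0 := congrFun h0 1
      have e2 : c = 0 := congrFun h0 2
      omega)
  rw [abs_zero, zero_mul] at this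
  linarith

lemma rep_zpow {α w w' : ℝ} (hα : α ^ 3 = α ^ 2 + α + 1) (h : ZRep α w 1) (h' : ZRep α w' 1)
    (hw : w' = w⁻¹) (e : ℤ) (N : ℕ) (he : |e| ≤ N) : ZRep α (w ^ e) (21 ^ N) := by
  have key : ∀ v : ℝ, ZRep α v 1 → ∀ n : ℕ, n ≤ N → ZRep α (v ^ n) (21 ^ N) := by
    intro v hv n hn
    refine rep_mono (rep_pow hα hv n) ?_
    rw [mul_one]
    exact pow_le_pow_right₀ (by norm_num) hn
  rw [abs_le] at he
  obtain ⟨n, rfl | rfl⟩ := e.eq_nat_or_neg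
  · rw [zpow_natCast]; exact key w h n (by omega)
  · rw [zpow_neg, zpow_natCast, ← inv_pow, ← hw]; exact key w' h' n (by omega)
end FT

namespace FT

lemma log_alpha {α : ℝ} (h1 : 1.83 < α) (h2 : α < 1.84) : 0.6 ≤ Real.log α ∧ Real.log α ≤ 0.62 := by
  have h0 : 0 < α := by linarith
  constructor
  · rw [Real.le_log_iff_exp_le h0]
    -- exp 0.6 ≤ 1.83
    have h3 : Real.exp 0.6 ^ 5 = Real.exp 1 ^ 3 := by
      rw [← Real.exp_nat_mul, ← Real.exp_nat_mul]; norm_num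
    have h4 := Real.exp_one_lt_d9
    have h5 : Real.exp 1 ^ 3 ≤ 2.7183 ^ 3 := by gcongr; linarith
    by_contra hcon
    have h6 : (1.83 : ℝ) ^ 5 ≤ Real.exp 0.6 ^ 5 := by gcongr; linarith
    rw [h3] at h6
    norm_num at h5 h6
    linarith
  · rw [Real.log_le_iff_le_exp h0]
    have h3 := Real.quadratic_le_exp_of_nonneg (show (0 : ℝ) ≤ 0.31 by norm_num)
    have h4 : Real.exp 0.62 = Real.exp 0.31 ^ 2 := by rw [← Real.exp_nat_mul]; norm_num
    rw [h4]
    nlinarith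

lemma log_phi : 0.38 ≤ Real.log Real.goldenRatio ∧ Real.log Real.goldenRatio ≤ 0.49 := by
  have h0 := Real.goldenRatio_pos
  have hφ : (Real.goldenRatio - 1) * Real.goldenRatio = 1 := by
    have := Real.goldenRatio_sq; nlinarith
  have hinv : Real.goldenRatio⁻¹ = Real.goldenRatio - 1 := (eq_inv_of_mul_eq_one_left hφ).symm
  have hu : Real.goldenRatio ≤ 1.62 := by
    by_contra h
    nlinarith
  constructor
  · have := Real.one_sub_inv_le_log_of_pos h0
    rw [hinv] at this
    linarith
  · rw [Real.log_le_iff_le_exp h0]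
    have h3 := Real.quadratic_le_exp_of_nonneg (show (0 : ℝ) ≤ 0.245 by norm_num)
    have h4 : Real.exp 0.49 = Real.exp 0.245 ^ 2 := by rw [← Real.exp_nat_mul]; norm_num
    rw [h4]
    nlinarith

lemma abs_log_le (ε : ℝ) (hε1 : |ε| ≤ 1 / 10) : |Real.log (1 + ε)| ≤ 2 * |ε| := by
  have hε2 := abs_le.1 hε1
  have hp : 0 < 1 + ε := by linarith [hε2.1]
  have u1 := Real.log_le_sub_one_of_pos hp
  have u2 := Real.one_sub_inv_le_log_of_pos hp
  have u3 : -(2 * |ε|) ≤ 1 - (1 + ε)⁻¹ := by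
    have : 1 - (1 + ε)⁻¹ = ε / (1 + ε) := by field_simp; ring
    rw [this, le_div_iff₀ hp]
    rcases abs_cases ε with ⟨h, h'⟩ | ⟨h, h'⟩ <;> rw [h] <;> nlinarith only [h', hε2.1, hε2.2]
  rw [abs_le]
  constructor
  · linarith
  · have := le_abs_self ε
    have := abs_nonneg ε
    linarith

lemma log_id (φ α D s : ℝ) (n m M x y : ℕ) (n0 m0 : ℤ) (h1 : 0 < φ) (h2 : 0 < α) (h3 : 0 < D) (h4 : 0 < s)
    (hnr : (n : ℝ) = n0 + M * x) (hmr : (m : ℝ) = m0 + M * y) :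
    Real.log (φ ^ n0 * α ^ (-m0 - 1) * D / s) - M * (y * Real.log α - x * Real.log φ) =
    Real.log (φ ^ n / s / (α / D * α ^ m)) := by
  have e1 : Real.log (φ ^ n0 * α ^ (-m0 - 1) * D / s) =
      n0 * Real.log φ + (-m0 - 1) * Real.log α + Real.log D - Real.log s := by
    rw [Real.log_div (by positivity) (by positivity), Real.log_mul (by positivity) (by positivity),
      Real.log_mul (by positivity) (by positivity), Real.log_zpow, Real.log_zpow]
    push_cast; ring
  have e2 : Real.log (φ ^ n / s / (α / D * α ^ m)) =
      n * Real.log φ - Real.log s - (Real.log α - Real.log D + m * Real.log α) := by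
    rw [Real.log_div (by positivity) (by positivity), Real.log_div (by positivity) (by positivity),
      Real.log_mul (by positivity) (by positivity), Real.log_div (by positivity) (by positivity),
      Real.log_pow, Real.log_pow]
  rw [e1, e2, hnr, hmr]
  ring

set_option maxHeartbeats 1000000 in
theorem partB (M n m x y : ℕ) (hM1 : 60000000000000000 ≤ M) (hM2 : M ≤ 10 ^ 17) (n0 m0 : ℤ)
    (hn0 : |n0| ≤ 26) (hm0 : -16 ≤ m0) (hm0' : m0 ≤ 21)
    (hn : (n : ℤ) = n0 + M * x) (hm : (m : ℤ) = m0 + M * y) (hy : 1 ≤ y)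
    (heq : (Nat.fib n : ℤ) - trib m = -22) : False := by
  obtain ⟨α, hα, h1, h2⟩ := exists_alpha
  have hα0 : 0 < α := by linarith
  have hφ0 := Real.goldenRatio_pos
  obtain ⟨la1, la2⟩ := log_alpha h1 h2
  obtain ⟨lp1, lp2⟩ := log_phi
  obtain ⟨D, hD⟩ : ∃ D, D = 3 * α ^ 2 - 2 * α - 1 := ⟨_, rfl⟩
  have hD1 : 5 ≤ D := by rw [hD]; nlinarith only [h1, h2]
  have hD2 : D ≤ 6 := by rw [hD]; nlinarith only [h1, h2]
  have hD0 : 0 < D := by linarith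
  have s5 : (0 : ℝ) < √5 := by positivity
  have s5l : (2.2 : ℝ) ≤ √5 := Real.le_sqrt_of_sq_le (by norm_num)
  have s5u : √5 ≤ 2.3 := Real.sqrt_le_iff.2 (by norm_num)
  have hφi : Real.goldenRatio - 1 = Real.goldenRatio⁻¹ := by
    apply eq_inv_of_mul_eq_one_left
    have := Real.goldenRatio_sq; linarith
  have hαi : α ^ 2 - α - 1 = α⁻¹ := by
    apply eq_inv_of_mul_eq_one_left
    linear_combination hα
  obtain ⟨η, hη⟩ : ∃ η, η = Real.goldenRatio ^ n0 * α ^ (-m0 - 1) * D / √5 := ⟨_, rfl⟩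
  have hη0 : 0 < η := by rw [hη]; positivity
  have hζrep : ZRep α (√5 * η) (3 * 21 ^ 50) := by
    have e : √5 * η = Real.goldenRatio ^ n0 * α ^ (-m0 - 1) * D := by rw [hη]; field_simp
    rw [e]
    have rφ : ZRep α Real.goldenRatio 1 := by
      refine ⟨![0, 0, 0, 1, 0, 0], ?_, ?_⟩
      · simp [Fin.sum_univ_six, bas]
      · intro i; fin_cases i <;> simp
    have rαi : ZRep α (α ^ 2 - α - 1) 1 := by
      refine ⟨![-1, -1, 1, 0, 0, 0], ?_, ?_⟩
      · simp [Fin.sum_univ_six, bas]; ring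
      · intro i; fin_cases i <;> simp
    have rD : ZRep α D 3 := by
      refine ⟨![-1, -2, 3, 0, 0, 0], ?_, ?_⟩
      · simp [Fin.sum_univ_six, bas, hD]; ring
      · intro i; fin_cases i <;> simp <;> norm_num
    refine rep_mono (rep_mul hα (rep_mul hα (rep_zpow hα rφ (rep_psi α) hφi n0 26 (by exact_mod_cast hn0))
      (rep_zpow hα (rep_alpha α) rαi hαi (-m0 - 1) 22 (by rw [abs_le]; constructor <;> push_cast <;> linarith)))
      rD) ?_
    norm_num
  -- logarithm of η
  have hlogη : |Real.log η| ≤ 27.5 := by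
    have e1 : Real.log η = n0 * Real.log Real.goldenRatio + (-m0 - 1 : ℤ) * Real.log α + Real.log (D / √5) := by
      rw [hη, mul_div_assoc, Real.log_mul (by positivity) (by positivity),
        Real.log_mul (by positivity) (by positivity), Real.log_zpow, Real.log_zpow]
    have e2 : |Real.log (D / √5)| ≤ 1 := by
      rw [abs_le]
      constructor
      · have : 0 ≤ Real.log (D / √5) := Real.log_nonneg (by rw [le_div_iff₀ s5]; linarith)
        linarith
      · rw [Real.log_le_iff_le_exp (by positivity)]
        have := Real.exp_one_gt_d9
        rw [div_le_iff₀ s5]; nlinarith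
    have e3 : |(n0 : ℝ) * Real.log Real.goldenRatio| ≤ 26 * 0.49 := by
      rw [abs_mul, abs_of_nonneg (by linarith : 0 ≤ Real.log Real.goldenRatio)]
      have : |(n0 : ℝ)| ≤ 26 := by exact_mod_cast hn0
      gcongr
    have e4 : |((-m0 - 1 : ℤ) : ℝ) * Real.log α| ≤ 22 * 0.62 := by
      rw [abs_mul, abs_of_nonneg (by linarith : 0 ≤ Real.log α)]
      have : |((-m0 - 1 : ℤ) : ℝ)| ≤ 22 := by
        have : |-m0 - 1| ≤ 22 := by rw [abs_le]; constructor <;> linarith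
        exact_mod_cast this
      gcongr
    rw [e1]
    calc _ ≤ |(n0 : ℝ) * Real.log Real.goldenRatio| + |((-m0 - 1 : ℤ) : ℝ) * Real.log α| +
          |Real.log (D / √5)| := abs_add_three _ _ _
      _ ≤ 26 * 0.49 + 22 * 0.62 + 1 := by gcongr
      _ ≤ 27.5 := by norm_num
  obtain ⟨X, hX⟩ : ∃ X, X = α ^ y * (Real.goldenRatio - 1) ^ x := ⟨_, rfl⟩
  have hX1 : X ≠ 1 := by rw [hX]; exact pow_ne hα h1 h2 x y hy
  have hX0 : 0 < X := by rw [hX, hφi]; positivity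
  have hlogX : Real.log X = y * Real.log α - x * Real.log Real.goldenRatio := by
    rw [hX, hφi, Real.log_mul (by positivity) (by positivity), Real.log_pow, Real.log_pow,
      Real.log_inv]; ring
  obtain ⟨δ, hδ⟩ : ∃ δ, δ = Real.log η - M * Real.log X := ⟨_, rfl⟩
  -- size of m
  have hyr : (1 : ℝ) ≤ y := by exact_mod_cast hy
  have hMr : (60000000000000000 : ℝ) ≤ M := by exact_mod_cast hM1
  have hmr : (m : ℝ) = m0 + M * y := by exact_mod_cast hm
  have hnr : (n : ℝ) = n0 + M * x := by exact_mod_cast hn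
  have hm0r : (-16 : ℝ) ≤ m0 := by exact_mod_cast hm0
  have hαm : α ^ m = Real.exp (m * Real.log α) := by
    rw [Real.exp_nat_mul, Real.exp_log hα0]
  have hMy : (60000000000000000 : ℝ) * y ≤ M * y := by gcongr
  have hbig : 35000000000000000 * (y : ℝ) ≤ m * Real.log α := by
    calc 35000000000000000 * (y : ℝ) ≤ m * 0.6 := by rw [hmr]; linarith
      _ ≤ _ := by gcongr
  -- ε
  obtain ⟨ε, hε⟩ : ∃ ε, ε = Real.goldenRatio ^ n / √5 / (α / D * α ^ m) - 1 := ⟨_, rfl⟩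
  have hc0 : 0 < α / D * α ^ m := by positivity
  have hεb : |ε| ≤ 80 / α ^ m := by
    have t1 := trib_asym hα h1 h2 m
    have t2 := fib_asym n
    rw [← hD] at t1
    have heqr : (Nat.fib n : ℝ) - trib m = -22 := by exact_mod_cast heq
    have hd : |Real.goldenRatio ^ n / √5 - α / D * α ^ m| ≤ 24 := by
      rw [abs_le] at t1 t2 ⊢
      constructor <;> linarith [t1.1, t1.2, t2.1, t2.2]
    have hcl : 0.3 ≤ α / D := by rw [le_div_iff₀ hD0]; linarith
    have : ε = (Real.goldenRatio ^ n / √5 - α / D * α ^ m) / (α / D * α ^ m) := by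
      rw [hε, sub_div, div_self hc0.ne']
    rw [this, abs_div, abs_of_pos hc0, div_le_div_iff₀ hc0 (by positivity)]
    have : (0 : ℝ) < α ^ m := by positivity
    calc _ ≤ 24 * α ^ m := by gcongr
      _ ≤ 80 * (0.3 * α ^ m) := by linarith
      _ ≤ _ := by gcongr
  have hεe : 80 / α ^ m ≤ Real.exp (-(32000000000000000 * (y : ℝ))) := by
    rw [hαm, div_eq_mul_inv, ← Real.exp_neg]
    have : (80 : ℝ) ≤ Real.exp 80 := by have := Real.add_one_le_exp (80 : ℝ); linarith
    refine (mexp this le_rfl (Real.exp_pos _).le).trans (Real.exp_le_exp.2 ?_)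
    linarith
  have hsmall : Real.exp (-(32000000000000000 * (y : ℝ))) ≤ 1 / 10 := by
    have : Real.exp (-(32000000000000000 * (y : ℝ))) ≤ Real.exp (-2.99 + -2.99) :=
      Real.exp_le_exp.2 (by linarith)
    refine this.trans ?_
    have h9 := Real.add_one_le_exp (5.98 + 10 : ℝ)
    rw [show (-2.99 + -2.99 : ℝ) = -(5.98) by norm_num, Real.exp_neg, one_div]
    have h3 := Real.quadratic_le_exp_of_nonneg (show (0 : ℝ) ≤ 5.98 by norm_num)
    apply inv_anti₀ (by norm_num)
    norm_num at h3 ⊢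
    linarith
  have hε1 : |ε| ≤ 1 / 10 := hεb.trans (hεe.trans hsmall)
  have hε2 := abs_le.1 hε1
  have hδε : δ = Real.log (1 + ε) := by
    have : 1 + ε = Real.goldenRatio ^ n / √5 / (α / D * α ^ m) := by rw [hε]; ring
    rw [this, hδ, hη, hlogX]
    exact log_id _ α D _ n m M x y n0 m0 hφ0 hα0 hD0 s5 hnr hmr
  have hδ1 : |δ| ≤ 2 * |ε| := by
    rw [hδε]
    exact abs_log_le ε hε1
  have hδ2 : |δ| ≤ 0.2 := by linarith
  have hTX : |Real.log X| * M ≤ 28 := by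
    have : |Real.log X| * M = |Real.log η - δ| := by
      rw [hδ, sub_sub_cancel, abs_mul, Nat.abs_cast, mul_comm]
    rw [this]
    calc _ ≤ |Real.log η| + |δ| := abs_sub _ _
      _ ≤ 28 := by linarith
  -- x ≤ 2 y
  have hxy : (x : ℝ) ≤ 2 * y := by
    have h3 : -0.01 ≤ Real.log X := by
      have : |Real.log X| ≤ 0.01 := by
        by_contra hcon
        push Not at hcon
        have : 0.01 * 60000000000000000 ≤ |Real.log X| * M := by gcongr
        linarith
      exact (abs_le.1 this).1
    rw [hlogX] at h3
    have h4 : (y : ℝ) * Real.log α ≤ y * 0.62 := by gcongr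
    have h5 : (x : ℝ) * 0.38 ≤ x * Real.log Real.goldenRatio := by gcongr
    linarith
  refine core hα hα0 (by linarith) M x y (by omega) (by omega) ?_ η (√5 * η) (3 * 21 ^ 50) hη0 rfl hζrep
    (by norm_num) ?_ X hX hX1 δ (by rw [hδ]; ring) ?_ hTX (by linarith)
  · have h40 := small_exp 1 (10 ^ 17) le_rfl le_rfl
    have : (M : ℝ) ≤ 10 ^ 17 := by exact_mod_cast hM2
    have e1 : (10 : ℝ) ^ 17 ≤ Real.exp 40 := by
      rw [show (40 : ℝ) = ((40 : ℕ) : ℝ) * 1 by norm_num, Real.exp_nat_mul]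
      calc (10 : ℝ) ^ 17 ≤ 2.7 ^ 40 := by norm_num
        _ ≤ _ := by
          gcongr
          have := Real.exp_one_gt_d9
          linarith
    exact this.trans (e1.trans (Real.exp_le_exp.2 (by norm_num)))
  · calc (21 : ℝ) * (3 * 21 ^ 50) ≤ 21 ^ 52 := by norm_num
      _ ≤ _ := pexp 52 (by norm_num) exp21
      _ ≤ _ := Real.exp_le_exp.2 (by norm_num)
  · refine hδ1.trans ?_
    have e1 : |ε| ≤ Real.exp (-(32000000000000000 * (y : ℝ))) := hεb.trans hεe
    have e2 : (2 : ℝ) ≤ Real.exp 2 := by have := Real.add_one_le_exp (2 : ℝ); linarith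
    refine (mexp e2 e1 (abs_nonneg _)).trans (Real.exp_le_exp.2 ?_)
    push_cast
    linarith
end FT

namespace FT

def force {β : Type} (n : ℕ) (k : ℕ → β) : β :=
  match n with
  | 0 => k 0
  | n + 1 => k (n + 1)

lemma force_eq {β : Type} (n : ℕ) (k : ℕ → β) : force n k = k n := by
  cases n <;> rfl

def tmul (Q : ℕ) (c d : ℕ × ℕ × ℕ) : ℕ × ℕ × ℕ :=
  match c, d with
  | (c0, c1, c2), (d0, d1, d2) =>
    force ((c1 * d2 + c2 * d1) % Q) fun e3 =>
    force ((c2 * d2) % Q) fun e4 =>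
    force ((c0 * d0 + e3 + e4) % Q) fun r0 =>
    force ((c0 * d1 + c1 * d0 + e3 + 2 * e4) % Q) fun r1 =>
    force ((c0 * d2 + c1 * d1 + c2 * d0 + e3 + 2 * e4) % Q) fun r2 => (r0, r1, r2)

def fmul (Q : ℕ) (c d : ℕ × ℕ) : ℕ × ℕ :=
  match c, d with
  | (c0, c1), (d0, d1) =>
    force ((c0 * d0 + c1 * d1) % Q) fun r0 =>
    force ((c0 * d1 + c1 * d0 + c1 * d1) % Q) fun r1 => (r0, r1)

def TI (Q N : ℕ) (c : ℕ × ℕ × ℕ) : Prop :=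
  ∀ k, ((trib (N + k) : ℤ) : ZMod Q) =
    c.1 * (trib k : ℤ) + c.2.1 * (trib (k + 1) : ℤ) + c.2.2 * (trib (k + 2) : ℤ)

def FI (Q N : ℕ) (c : ℕ × ℕ) : Prop :=
  ∀ k, ((Nat.fib (N + k) : ℕ) : ZMod Q) = c.1 * (Nat.fib k : ℕ) + c.2 * (Nat.fib (k + 1) : ℕ)

lemma trib3 (k : ℕ) : trib (k + 3) = trib (k + 2) + trib (k + 1) + trib k := by
  rw [trib]

lemma TI.mul {Q N N' : ℕ} {c d : ℕ × ℕ × ℕ} (h : TI Q N c) (h' : TI Q N' d) :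
    TI Q (N + N') (tmul Q c d) := by
  intro k
  obtain ⟨c0, c1, c2⟩ := c
  obtain ⟨d0, d1, d2⟩ := d
  have h1 := h (N' + k)
  have e0 := h' k
  have e1 := h' (k + 1)
  have e2 := h' (k + 2)
  rw [show N' + (k + 1) = N' + k + 1 by ring] at e1
  rw [show N' + (k + 2) = N' + k + 2 by ring] at e2
  rw [e0, e1, e2] at h1
  rw [add_assoc, h1]
  have t3 := trib3 k
  have t4 := trib3 (k + 1)
  simp only [add_assoc, Nat.reduceAdd] at t3 t4 ⊢
  rw [t4, t3]
  simp only [tmul, force_eq]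
  push_cast [ZMod.natCast_mod]
  ring

lemma FI.mul {Q N N' : ℕ} {c d : ℕ × ℕ} (h : FI Q N c) (h' : FI Q N' d) :
    FI Q (N + N') (fmul Q c d) := by
  intro k
  obtain ⟨c0, c1⟩ := c
  obtain ⟨d0, d1⟩ := d
  have h1 := h (N' + k)
  have e0 := h' k
  have e1 := h' (k + 1)
  rw [show N' + (k + 1) = N' + k + 1 by ring] at e1
  rw [e0, e1] at h1
  rw [add_assoc, h1]
  have t3 := Nat.fib_add_two (n := k)
  simp only [add_assoc, Nat.reduceAdd] at t3 ⊢
  rw [t3]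
  simp only [fmul, force_eq]
  push_cast [ZMod.natCast_mod]
  ring

lemma TI.zero (Q : ℕ) : TI Q 0 (1, 0, 0) := by
  intro k; simp
lemma FI.zero (Q : ℕ) : FI Q 0 (1, 0) := by
  intro k; simp
lemma TI.one (Q : ℕ) : TI Q 1 (0, 1, 0) := by
  intro k; simp [add_comm]
lemma FI.one (Q : ℕ) : FI Q 1 (0, 1) := by
  intro k; simp [add_comm]

def tpow (Q : ℕ) : ℕ → ℕ → ℕ × ℕ × ℕ
  | 0, _ => (1, 0, 0)
  | f + 1, N =>
    match tpow Q f (N / 2) with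
    | (a, b, c) =>
      match N % 2 with
      | 0 => tmul Q (a, b, c) (a, b, c)
      | _ + 1 => tmul Q (tmul Q (a, b, c) (a, b, c)) (0, 1, 0)

def fpow (Q : ℕ) : ℕ → ℕ → ℕ × ℕ
  | 0, _ => (1, 0)
  | f + 1, N =>
    match fpow Q f (N / 2) with
    | (a, b) =>
      match N % 2 with
      | 0 => fmul Q (a, b) (a, b)
      | _ + 1 => fmul Q (fmul Q (a, b) (a, b)) (0, 1)

lemma tpow_spec (Q f : ℕ) : ∀ N, N < 2 ^ f → TI Q N (tpow Q f N) := by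
  induction f with
  | zero =>
    intro N h
    obtain rfl : N = 0 := by simpa using h
    exact TI.zero Q
  | succ f ih =>
    intro N h
    have h1 := ih (N / 2) (by rw [pow_succ] at h; omega)
    rw [tpow]
    revert h1
    generalize tpow Q f (N / 2) = z
    obtain ⟨a, b, c⟩ := z
    intro h1
    rcases hN : N % 2 with _ | r
    · have := h1.mul h1
      rwa [show N / 2 + N / 2 = N by omega] at this
    · have := (h1.mul h1).mul (TI.one Q)
      rwa [show N / 2 + N / 2 + 1 = N by omega] at this

lemma fpow_spec (Q f : ℕ) : ∀ N, N < 2 ^ f → FI Q N (fpow Q f N) := by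
  induction f with
  | zero =>
    intro N h
    obtain rfl : N = 0 := by simpa using h
    exact FI.zero Q
  | succ f ih =>
    intro N h
    have h1 := ih (N / 2) (by rw [pow_succ] at h; omega)
    rw [fpow]
    revert h1
    generalize fpow Q f (N / 2) = z
    obtain ⟨a, b⟩ := z
    intro h1
    rcases hN : N % 2 with _ | r
    · have := h1.mul h1
      rwa [show N / 2 + N / 2 = N by omega] at this
    · have := (h1.mul h1).mul (FI.one Q)
      rwa [show N / 2 + N / 2 + 1 = N by omega] at this

/-- inner loop: positions `b, b+M, …`, state `c`, comparing with `v`. -/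
def tloop (Q M : ℕ) (g : ℕ × ℕ × ℕ) (A v : ℕ) :
    ℕ → ℕ → ℕ × ℕ × ℕ → List (ℕ × ℕ) → List (ℕ × ℕ)
  | 0, _, _, acc => acc
  | f + 1, b, c, acc =>
    match c with
    | (c0, c1, c2) =>
      force (b + M) fun b' =>
      match Nat.beq ((c1 + c2) % Q) v with
      | true => tloop Q M g A v f b' (tmul Q (c0, c1, c2) g) ((A, b) :: acc)
      | false => tloop Q M g A v f b' (tmul Q (c0, c1, c2) g) acc

def floop (Q M p : ℕ) (h : ℕ × ℕ) (g : ℕ × ℕ × ℕ) (b : ℕ) (cb : ℕ × ℕ × ℕ) :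
    ℕ → ℕ → ℕ × ℕ → List (ℕ × ℕ) → List (ℕ × ℕ)
  | 0, _, _, acc => acc
  | f + 1, a, c, acc =>
    match c with
    | (c0, c1) =>
      force (a + M) fun a' =>
      force ((c1 + 22) % Q) fun v =>
      floop Q M p h g b cb f a' (fmul Q (c0, c1) h) (tloop Q M g a v p b cb acc)

def sloop (Q M p : ℕ) (h : ℕ × ℕ) (g : ℕ × ℕ × ℕ) : List (ℕ × ℕ) → List (ℕ × ℕ) → List (ℕ × ℕ)
  | [], acc => acc
  | (a, b) :: L, acc =>
    sloop Q M p h g L (floop Q M p h g b (tpow Q 60 b) p a (fpow Q 60 a) acc)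

def sieve (Q M p : ℕ) (L : List (ℕ × ℕ)) : List (ℕ × ℕ) :=
  sloop Q M p (fpow Q 60 M) (tpow Q 60 M) L []

lemma tloop_acc (Q M : ℕ) (g : ℕ × ℕ × ℕ) (A v : ℕ) (f : ℕ) : ∀ b c acc z, z ∈ acc →
    z ∈ tloop Q M g A v f b c acc := by
  induction f with
  | zero => intro b c acc z hz; exact hz
  | succ f ih =>
    intro b c acc z hz
    obtain ⟨c0, c1, c2⟩ := c
    simp only [tloop, force_eq]
    split
    · exact ih _ _ _ _ (List.mem_cons_of_mem _ hz)
    · exact ih _ _ _ _ hz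

lemma TI.val {Q N : ℕ} {c : ℕ × ℕ × ℕ} (h : TI Q N c) :
    ((trib N : ℤ) : ZMod Q) = ((c.2.1 + c.2.2 : ℕ) : ZMod Q) := by
  have := h 0
  simpa [trib] using this

lemma FI.val {Q N : ℕ} {c : ℕ × ℕ} (h : FI Q N c) :
    ((Nat.fib N : ℕ) : ZMod Q) = ((c.2 : ℕ) : ZMod Q) := by
  have := h 0
  simpa using this

lemma tloop_mem (Q M : ℕ) (g : ℕ × ℕ × ℕ) (hg : TI Q M g) (A v : ℕ) (hv : v % Q = v) (f : ℕ) :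
    ∀ b c acc, TI Q b c → ∀ j < f, ((trib (b + j * M) : ℤ) : ZMod Q) = (v : ZMod Q) →
    (A, b + j * M) ∈ tloop Q M g A v f b c acc := by
  induction f with
  | zero => intro b c acc _ j hj; omega
  | succ f ih =>
    intro b c acc hc j hj he
    have hcg := hc.mul hg
    have hcv := hc.val
    obtain ⟨c0, c1, c2⟩ := c
    simp only [tloop, force_eq]
    rcases j with _ | j
    · simp only [zero_mul, add_zero] at he ⊢
      rw [hcv, ZMod.natCast_eq_natCast_iff, Nat.ModEq, hv] at he
      simp only at he
      rw [he, Nat.beq_refl]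
      exact tloop_acc _ _ _ _ _ _ _ _ _ _ List.mem_cons_self
    · have e : b + (j + 1) * M = b + M + j * M := by ring
      rw [e] at he ⊢
      split
      · exact ih _ _ _ hcg j (by omega) he
      · exact ih _ _ _ hcg j (by omega) he

lemma floop_acc (Q M p : ℕ) (h : ℕ × ℕ) (g : ℕ × ℕ × ℕ) (b : ℕ) (cb : ℕ × ℕ × ℕ) (f : ℕ) :
    ∀ a c acc z, z ∈ acc → z ∈ floop Q M p h g b cb f a c acc := by
  induction f with
  | zero => intro a c acc z hz; exact hz
  | succ f ih =>
    intro a c acc z hz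
    obtain ⟨c0, c1⟩ := c
    simp only [floop, force_eq]
    exact ih _ _ _ _ (tloop_acc _ _ _ _ _ _ _ _ _ _ hz)

lemma floop_mem (Q M p : ℕ) (h : ℕ × ℕ) (hh : FI Q M h) (g : ℕ × ℕ × ℕ) (hg : TI Q M g)
    (b : ℕ) (cb : ℕ × ℕ × ℕ) (hb : TI Q b cb) (f : ℕ) :
    ∀ a c acc, FI Q a c → ∀ i < f, ∀ j < p,
      ((Nat.fib (a + i * M) : ℕ) : ZMod Q) + 22 = ((trib (b + j * M) : ℤ) : ZMod Q) →
    (a + i * M, b + j * M) ∈ floop Q M p h g b cb f a c acc := by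
  induction f with
  | zero => intro b c acc _ j hj; omega
  | succ f ih =>
    intro a c acc hc i hi j hj he
    have hcg := hc.mul hh
    have hcv := hc.val
    obtain ⟨c0, c1⟩ := c
    simp only [floop, force_eq]
    rcases i with _ | i
    · simp only [zero_mul, add_zero] at he ⊢
      apply floop_acc
      apply tloop_mem Q M g hg a _ (Nat.mod_mod _ _) p b cb acc hb j hj
      rw [← he, hcv]
      push_cast [ZMod.natCast_mod]
      rfl
    · have e : a + (i + 1) * M = a + M + i * M := by ring
      rw [e] at he ⊢
      exact ih _ _ _ hcg i (by omega) j hj he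

lemma sloop_acc (Q M p : ℕ) (h : ℕ × ℕ) (g : ℕ × ℕ × ℕ) (L : List (ℕ × ℕ)) :
    ∀ acc z, z ∈ acc → z ∈ sloop Q M p h g L acc := by
  induction L with
  | nil => intro acc z hz; exact hz
  | cons x L ih =>
    intro acc z hz
    obtain ⟨a, b⟩ := x
    rw [sloop]
    exact ih _ _ (floop_acc _ _ _ _ _ _ _ _ _ _ _ _ hz)

lemma sloop_mem (Q M p : ℕ) (h : ℕ × ℕ) (hh : FI Q M h) (g : ℕ × ℕ × ℕ) (hg : TI Q M g)
    (L : List (ℕ × ℕ)) :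
    ∀ acc, ∀ a b, (a, b) ∈ L → a < 2 ^ 60 → b < 2 ^ 60 → ∀ i < p, ∀ j < p,
      ((Nat.fib (a + i * M) : ℕ) : ZMod Q) + 22 = ((trib (b + j * M) : ℤ) : ZMod Q) →
    (a + i * M, b + j * M) ∈ sloop Q M p h g L acc := by
  induction L with
  | nil => intro acc a b hab; simp at hab
  | cons x L ih =>
    intro acc a b hab ha hb i hi j hj he
    obtain ⟨a', b'⟩ := x
    rw [sloop]
    rcases List.mem_cons.1 hab with h1 | h1
    · obtain ⟨rfl, rfl⟩ := Prod.mk.inj h1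
      apply sloop_acc
      exact floop_mem Q M p h hh g hg _ _ (tpow_spec Q 60 _ hb) p _ _ _ (fpow_spec Q 60 _ ha)
        i hi j hj he
    · exact ih _ a b h1 ha hb i hi j hj he

def Cov (M : ℕ) (L : List (ℕ × ℕ)) : Prop :=
  ∀ n m : ℕ, (Nat.fib n : ℤ) - trib m = -22 → (n % M, m % M) ∈ L

lemma TI.per {Q P : ℕ} (h : TI Q P (1, 0, 0)) (a x : ℕ) :
    ((trib (a + P * x) : ℤ) : ZMod Q) = ((trib a : ℤ) : ZMod Q) := by
  induction x with
  | zero => rfl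
  | succ x ih =>
    have := h (a + P * x)
    rw [show a + P * (x + 1) = P + (a + P * x) by ring, this, ← ih]
    simp

lemma FI.per {Q P : ℕ} (h : FI Q P (1, 0)) (a x : ℕ) :
    ((Nat.fib (a + P * x) : ℕ) : ZMod Q) = ((Nat.fib a : ℕ) : ZMod Q) := by
  induction x with
  | zero => rfl
  | succ x ih =>
    have := h (a + P * x)
    rw [show a + P * (x + 1) = P + (a + P * x) by ring, this, ← ih]
    simp

lemma cov_step (Q M p : ℕ) (L : List (ℕ × ℕ)) (hM : 0 < M) (hp : 0 < p) (hMp : M * p < 2 ^ 60)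
    (hF : fpow Q 60 (M * p) = (1, 0)) (hT : tpow Q 60 (M * p) = (1, 0, 0))
    (hL : Cov M L) : Cov (M * p) (sieve Q M p L) := by
  intro n m he
  have hM' : M < 2 ^ 60 := lt_of_le_of_lt (Nat.le_mul_of_pos_right M hp) hMp
  have hFI := fpow_spec Q 60 _ hMp
  have hTI := tpow_spec Q 60 _ hMp
  rw [hF] at hFI
  rw [hT] at hTI
  have h1 := hL n m he
  have e1 : n % (M * p) = n % M + (n / M % p) * M := by rw [Nat.mod_mul]; ring
  have e2 : m % (M * p) = m % M + (m / M % p) * M := by rw [Nat.mod_mul]; ring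
  rw [e1, e2]
  apply sloop_mem Q M p _ (fpow_spec Q 60 _ hM') _ (tpow_spec Q 60 _ hM') L [] _ _ h1
    ((Nat.mod_lt _ hM).trans hM') ((Nat.mod_lt _ hM).trans hM') _ (Nat.mod_lt _ hp) _ (Nat.mod_lt _ hp)
  rw [← e1, ← e2, ← hFI.per _ (n / (M * p)), ← hTI.per _ (m / (M * p)), Nat.mod_add_div, Nat.mod_add_div]
  have : trib m = Nat.fib n + 22 := by linarith
  rw [this]
  push_cast
  rfl

def mem2 (z : ℕ × ℕ) : List (ℕ × ℕ) → Bool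
  | [] => false
  | w :: L => (Nat.beq z.1 w.1 && Nat.beq z.2 w.2) || mem2 z L

def sub2 : List (ℕ × ℕ) → List (ℕ × ℕ) → Bool
  | [], _ => true
  | w :: L, L' => mem2 w L' && sub2 L L'

lemma mem2_spec (z : ℕ × ℕ) (L : List (ℕ × ℕ)) (h : mem2 z L = true) : z ∈ L := by
  induction L with
  | nil => simp [mem2] at h
  | cons w L ih =>
    simp only [mem2, Bool.or_eq_true, Bool.and_eq_true] at h
    rcases h with ⟨h1, h2⟩ | h
    · have : z = w := Prod.ext (Nat.eq_of_beq_eq_true h1) (Nat.eq_of_beq_eq_true h2)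
      simp [this]
    · exact List.mem_cons_of_mem _ (ih h)

lemma sub2_spec (L L' : List (ℕ × ℕ)) (h : sub2 L L' = true) : ∀ z ∈ L, z ∈ L' := by
  induction L with
  | nil => simp
  | cons w L ih =>
    simp only [sub2, Bool.and_eq_true] at h
    intro z hz
    rcases List.mem_cons.1 hz with rfl | hz
    · exact mem2_spec _ _ h.1
    · exact ih h.2 z hz

def L9 (M : ℕ) : List (ℕ × ℕ) :=
  [(M - 8, 1), (M - 8, 2), (3, 7), (M - 3, 7), (26, 21), (M - 8, M - 2), (M - 8, M - 7),
    (9, M - 16), (M - 9, M - 16)]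

def okp (Q P : ℕ) : Bool :=
  match fpow Q 60 P, tpow Q 60 P with
  | (a, b), (c, d, e) => Nat.beq a 1 && Nat.beq b 0 && Nat.beq c 1 && Nat.beq d 0 && Nat.beq e 0

lemma okp_spec (Q P : ℕ) (h : okp Q P = true) : fpow Q 60 P = (1, 0) ∧ tpow Q 60 P = (1, 0, 0) := by
  unfold okp at h
  revert h
  generalize fpow Q 60 P = z
  generalize tpow Q 60 P = w
  obtain ⟨a, b⟩ := z
  obtain ⟨c, d, e⟩ := w
  intro h
  simp only [Bool.and_eq_true] at h
  obtain ⟨⟨⟨⟨h1, h2⟩, h3⟩, h4⟩, h5⟩ := h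
  rw [Nat.eq_of_beq_eq_true h1, Nat.eq_of_beq_eq_true h2, Nat.eq_of_beq_eq_true h3,
    Nat.eq_of_beq_eq_true h4, Nat.eq_of_beq_eq_true h5]
  exact ⟨rfl, rfl⟩

lemma cov_step' (Q M p : ℕ) (L L' : List (ℕ × ℕ)) (hL : Cov M L) (hM : 0 < M) (hp : 0 < p)
    (hMp : M * p < 2 ^ 60)
    (h1 : okp Q (M * p) = true) (h2 : sub2 (sieve Q M p L) L' = true) : Cov (M * p) L' := by
  obtain ⟨h3, h4⟩ := okp_spec _ _ h1
  intro n m he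
  exact sub2_spec _ _ h2 _ (cov_step Q M p L hM hp hMp h3 h4 hL n m he)

lemma cov0 : Cov 1 [(0, 0)] := by
  intro n m _
  simp [Nat.mod_one]

def S48 : List (ℕ × ℕ) := sieve 14 1 48 [(0, 0)]
def S336 : List (ℕ × ℕ) := sieve 13 48 7 S48
def S1680 : List (ℕ × ℕ) := sieve 17261 336 5 S336

lemma c48 : Cov 48 S48 := by
  obtain ⟨h3, h4⟩ := okp_spec 14 (1 * 48) (by decide +kernel)
  exact cov_step 14 1 48 _ (by norm_num) (by norm_num) (by norm_num) h3 h4 cov0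

lemma c336 : Cov 336 S336 := by
  obtain ⟨h3, h4⟩ := okp_spec 13 (48 * 7) (by decide +kernel)
  exact cov_step 13 48 7 _ (by norm_num) (by norm_num) (by norm_num) h3 h4 c48

lemma c1680 : Cov 1680 S1680 := by
  obtain ⟨h3, h4⟩ := okp_spec 17261 (336 * 5) (by decide +kernel)
  exact cov_step 17261 336 5 _ (by norm_num) (by norm_num) (by norm_num) h3 h4 c336

lemma c18480 : Cov 18480 (L9 18480) :=
  cov_step' 203291 1680 11 S1680 _ c1680 (by norm_num) (by norm_num) (by norm_num)
    (by decide +kernel) (by decide +kernel)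

end FT

namespace FT

lemma cov9 (Q M p N : ℕ) (hN : N = M * p) (hL : Cov M (L9 M)) (hM : 0 < M) (hp : 0 < p) (hMp : M * p < 2 ^ 60)
    (h1 : okp Q (M * p) = true) (h2 : sub2 (sieve Q M p (L9 M)) (L9 (M * p)) = true) :
    Cov N (L9 N) := by
  subst hN
  exact cov_step' Q M p _ _ hL hM hp hMp h1 h2

lemma cc0 : Cov 55440 (L9 55440) :=
  cov9 18829 18480 3 _ (by norm_num) c18480 (by norm_num) (by norm_num) (by norm_num) (by decide +kernel) (by decide +kernel)

lemma cc1 : Cov 166320 (L9 166320) :=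
  cov9 7561 55440 3 _ (by norm_num) cc0 (by norm_num) (by norm_num) (by norm_num) (by decide +kernel) (by decide +kernel)

lemma cc2 : Cov 332640 (L9 332640) :=
  cov9 47521 166320 2 _ (by norm_num) cc1 (by norm_num) (by norm_num) (by norm_num) (by decide +kernel) (by decide +kernel)

lemma cc3 : Cov 997920 (L9 997920) :=
  cov9 1621 332640 3 _ (by norm_num) cc2 (by norm_num) (by norm_num) (by norm_num) (by decide +kernel) (by decide +kernel)

lemma cc4 : Cov 2993760 (L9 2993760) :=
  cov9 748441 997920 3 _ (by norm_num) cc3 (by norm_num) (by norm_num) (by norm_num) (by decide +kernel) (by decide +kernel)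

lemma cc5 : Cov 8981280 (L9 8981280) :=
  cov9 408241 2993760 3 _ (by norm_num) cc4 (by norm_num) (by norm_num) (by norm_num) (by decide +kernel) (by decide +kernel)

lemma cc6 : Cov 44906400 (L9 44906400) :=
  cov9 401 8981280 5 _ (by norm_num) cc5 (by norm_num) (by norm_num) (by norm_num) (by decide +kernel) (by decide +kernel)

lemma cc7 : Cov 89812800 (L9 89812800) :=
  cov9 1425601 44906400 2 _ (by norm_num) cc6 (by norm_num) (by norm_num) (by norm_num) (by decide +kernel) (by decide +kernel)

lemma cc8 : Cov 179625600 (L9 179625600) :=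
  cov9 4481 89812800 2 _ (by norm_num) cc7 (by norm_num) (by norm_num) (by norm_num) (by decide +kernel) (by decide +kernel)

lemma cc9 : Cov 359251200 (L9 359251200) :=
  cov9 127 179625600 2 _ (by norm_num) cc8 (by norm_num) (by norm_num) (by norm_num) (by decide +kernel) (by decide +kernel)

lemma cc10 : Cov 718502400 (L9 718502400) :=
  cov9 15361 359251200 2 _ (by norm_num) cc9 (by norm_num) (by norm_num) (by norm_num) (by decide +kernel) (by decide +kernel)

lemma cc11 : Cov 1437004800 (L9 1437004800) :=
  cov9 2534401 718502400 2 _ (by norm_num) cc10 (by norm_num) (by norm_num) (by norm_num) (by decide +kernel) (by decide +kernel)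

lemma cc12 : Cov 4311014400 (L9 4311014400) :=
  cov9 2405701 1437004800 3 _ (by norm_num) cc11 (by norm_num) (by norm_num) (by norm_num) (by decide +kernel) (by decide +kernel)

lemma cc13 : Cov 12933043200 (L9 12933043200) :=
  cov9 328051 4311014400 3 _ (by norm_num) cc12 (by norm_num) (by norm_num) (by norm_num) (by decide +kernel) (by decide +kernel)

lemma cc14 : Cov 64665216000 (L9 64665216000) :=
  cov9 7001 12933043200 5 _ (by norm_num) cc13 (by norm_num) (by norm_num) (by norm_num) (by decide +kernel) (by decide +kernel)

lemma cc15 : Cov 323326080000 (L9 323326080000) :=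
  cov9 11251 64665216000 5 _ (by norm_num) cc14 (by norm_num) (by norm_num) (by norm_num) (by decide +kernel) (by decide +kernel)

lemma cc16 : Cov 1616630400000 (L9 1616630400000) :=
  cov9 206251 323326080000 5 _ (by norm_num) cc15 (by norm_num) (by norm_num) (by norm_num) (by decide +kernel) (by decide +kernel)

lemma cc17 : Cov 8083152000000 (L9 8083152000000) :=
  cov9 437501 1616630400000 5 _ (by norm_num) cc16 (by norm_num) (by norm_num) (by norm_num) (by decide +kernel) (by decide +kernel)

lemma cc18 : Cov 56582064000000 (L9 56582064000000) :=
  cov9 7351 8083152000000 7 _ (by norm_num) cc17 (by norm_num) (by norm_num) (by norm_num) (by decide +kernel) (by decide +kernel)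

lemma cc19 : Cov 396074448000000 (L9 396074448000000) :=
  cov9 22639 56582064000000 7 _ (by norm_num) cc18 (by norm_num) (by norm_num) (by norm_num) (by decide +kernel) (by decide +kernel)

lemma cc20 : Cov 2772521136000000 (L9 2772521136000000) :=
  cov9 240101 396074448000000 7 _ (by norm_num) cc19 (by norm_num) (by norm_num) (by norm_num) (by decide +kernel) (by decide +kernel)

lemma cc21 : Cov 30497732496000000 (L9 30497732496000000) :=
  cov9 3631 2772521136000000 11 _ (by norm_num) cc20 (by norm_num) (by norm_num) (by norm_num) (by decide +kernel) (by decide +kernel)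

lemma cc22 : Cov 60995464992000000 (L9 60995464992000000) :=
  cov9 1239041 30497732496000000 2 _ (by norm_num) cc21 (by norm_num) (by norm_num) (by norm_num) (by decide +kernel) (by decide +kernel)

end FT

namespace FT

lemma final_cases (n m : ℕ) (hn : 2 ≤ n) (hm : 2 ≤ m) (he : (Nat.fib n : ℤ) - trib m = -22) :
    (n = 3 ∧ m = 7) ∨ (n = 26 ∧ m = 21) := by
  have h := cc22 n m he
  have key : ∀ (x y : ℕ) (n0 m0 : ℤ), |n0| ≤ 26 → -16 ≤ m0 → m0 ≤ 21 →
      (n : ℤ) = n0 + 60995464992000000 * x → (m : ℤ) = m0 + 60995464992000000 * y → ¬ 1 ≤ y := by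
    intro x y n0 m0 h1 h2 h3 h4 h5 hy
    exact partB 60995464992000000 n m x y (by norm_num) (by norm_num) n0 m0 h1 h2 h3
      (by exact_mod_cast h4) (by exact_mod_cast h5) hy he
  have hn' := Nat.mod_add_div n 60995464992000000
  have hm' := Nat.mod_add_div m 60995464992000000
  have hf : ∀ k, 2 ≤ k → Nat.fib n = Nat.fib k → n = k := by
    intro k hk h
    have hmono : StrictMono fun n => Nat.fib (n + 2) := Nat.fib_add_two_strictMono
    have := hmono.injective (a₁ := n - 2) (a₂ := k - 2)
      (by simpa [Nat.sub_add_cancel hn, Nat.sub_add_cancel hk] using h)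
    omega
  have t2 : trib 2 = 1 := rfl
  have t7 : trib 7 = 24 := by decide +kernel
  have t21 : trib 21 = 121415 := by decide +kernel
  generalize n / 60995464992000000 = x at hn'
  generalize m / 60995464992000000 = y at hm'
  simp only [L9, List.mem_cons, Prod.mk.injEq, List.not_mem_nil, or_false] at h
  rcases h with ⟨h1, h2⟩ | ⟨h1, h2⟩ | ⟨h1, h2⟩ | ⟨h1, h2⟩ | ⟨h1, h2⟩ | ⟨h1, h2⟩ | ⟨h1, h2⟩ | ⟨h1, h2⟩ | ⟨h1, h2⟩ <;>
    rw [h1] at hn' <;> rw [h2] at hm'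
  · exact absurd (by omega) (key (x + 1) y (-8) 1 (by norm_num) (by norm_num) (by norm_num) (by omega) (by omega))
  · have := key (x + 1) y (-8) 2 (by norm_num) (by norm_num) (by norm_num) (by omega) (by omega)
    obtain rfl : m = 2 := by omega
    rw [t2] at he
    omega
  · have := key x y 3 7 (by norm_num) (by norm_num) (by norm_num) (by omega) (by omega)
    obtain rfl : m = 7 := by omega
    rw [t7] at he
    left
    exact ⟨hf 3 (by norm_num) (by rw [show Nat.fib 3 = 2 from rfl]; omega), rfl⟩
  · have := key (x + 1) y (-3) 7 (by norm_num) (by norm_num) (by norm_num) (by omega) (by omega)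
    obtain rfl : m = 7 := by omega
    rw [t7] at he
    left
    exact ⟨hf 3 (by norm_num) (by rw [show Nat.fib 3 = 2 from rfl]; omega), rfl⟩
  · have := key x y 26 21 (by norm_num) (by norm_num) (by norm_num) (by omega) (by omega)
    obtain rfl : m = 21 := by omega
    rw [t21] at he
    right
    have h26 : Nat.fib 26 = 121393 := by norm_num
    exact ⟨hf 26 (by norm_num) (by rw [h26]; omega), rfl⟩
  · exact absurd (by omega) (key (x + 1) (y + 1) (-8) (-2) (by norm_num) (by norm_num) (by norm_num) (by omega) (by omega))
  · exact absurd (by omega) (key (x + 1) (y + 1) (-8) (-7) (by norm_num) (by norm_num) (by norm_num) (by omega) (by omega))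
  · exact absurd (by omega) (key x (y + 1) 9 (-16) (by norm_num) (by norm_num) (by norm_num) (by omega) (by omega))
  · exact absurd (by omega) (key (x + 1) (y + 1) (-9) (-16) (by norm_num) (by norm_num) (by norm_num) (by omega) (by omega))

end FT

/-- The only representations of `-22` as `F n - T m` with `n, m ≥ 2` are
`(n, m) ∈ {(3,7), (26,21)}`. -/
theorem fib_sub_trib_eq_neg_twentytwo :
    {p : ℕ × ℕ | 2 ≤ p.1 ∧ 2 ≤ p.2 ∧ (Nat.fib p.1 : ℤ) - trib p.2 = -22} =
      ({(3, 7), (26, 21)} : Set (ℕ × ℕ)) := by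
  ext ⟨n, m⟩
  simp only [Set.mem_ofPred_eq, Set.mem_insert_iff, Set.mem_singleton_iff, Prod.mk.injEq]
  constructor
  · rintro ⟨h1, h2, h3⟩
    exact FT.final_cases n m h1 h2 h3
  · have t7 : trib 7 = 24 := by decide +kernel
    have t21 : trib 21 = 121415 := by decide +kernel
    have h26 : Nat.fib 26 = 121393 := by norm_num
    have h3 : Nat.fib 3 = 2 := rfl
    rintro (⟨rfl, rfl⟩ | ⟨rfl, rfl⟩)
    · rw [t7, h3]; norm_num
    · rw [t21, h26]; norm_num
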